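/- arXiv:1704.07231 — 2 statements merged into one kernel-verified Lean document; each statement's English description precedes it below -/
import Mathlib

section
/- Let M be a quadratic module of ℝ[X_1,…,X_n]. Then the following are equivalent: (a) there are m ∈ ℕ and a tuple g = (g_1,…,g_m) of polynomials such that S(g) is compact and the product ∏_{i∈I} g_i lies in M for every subset I ⊆ {1,…,m}; (b) there is some g ∈ M such that S(g) = {x ∈ ℝ^n : g(x) ≥ 0} is compact; (c) M is Archimedean. -/
open MvPolynomial

noncomputable section

/-- `S(g) = {x ∈ ℝⁿ : g₁(x) ≥ 0, …, g_m(x) ≥ 0}`. -/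
def SolSet {n m : ℕ} (g : Fin m → MvPolynomial (Fin n) ℝ) : Set (Fin n → ℝ) :=
  {x | ∀ i, 0 ≤ eval x (g i)}

/-- `M` is a quadratic module of `ℝ[X₁,…,X_n]`. -/
def IsQuadraticModule {n : ℕ} (M : Set (MvPolynomial (Fin n) ℝ)) : Prop :=
  1 ∈ M ∧ (∀ p ∈ M, ∀ q ∈ M, p + q ∈ M) ∧
    ∀ p : MvPolynomial (Fin n) ℝ, ∀ q ∈ M, p ^ 2 * q ∈ M

/-- A quadratic module is Archimedean if for every polynomial `p` there is `N ∈ ℕ`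
with `N - p ∈ M`. -/
def IsArchimedeanQM {n : ℕ} (M : Set (MvPolynomial (Fin n) ℝ)) : Prop :=
  ∀ p : MvPolynomial (Fin n) ℝ, ∃ N : ℕ, (N : MvPolynomial (Fin n) ℝ) - p ∈ M

set_option linter.style.haveILetI false

structure IsPre {A : Type*} [CommRing A] (T : Set A) : Prop where
  sq : ∀ x, x ^ 2 ∈ T
  add : ∀ x ∈ T, ∀ y ∈ T, x + y ∈ T
  mul : ∀ x ∈ T, ∀ y ∈ T, x * y ∈ T

theorem IsPre.zero {A : Type*} [CommRing A] {T : Set A} (h : IsPre T) : (0:A) ∈ T := by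
  simpa using h.sq 0
theorem IsPre.one {A : Type*} [CommRing A] {T : Set A} (h : IsPre T) : (1:A) ∈ T := by
  simpa using h.sq 1

theorem IsPre.adjoin {A : Type*} [CommRing A] {T : Set A} (h : IsPre T) (x : A) :
    IsPre {z | ∃ s ∈ T, ∃ t ∈ T, z = s + x * t} := by
  refine ⟨fun y => ⟨y ^ 2, h.sq y, 0, h.zero, by ring⟩, ?_, ?_⟩
  · rintro _ ⟨s, hs, t, ht, rfl⟩ _ ⟨s', hs', t', ht', rfl⟩
    exact ⟨s + s', h.add _ hs _ hs', t + t', h.add _ ht _ ht', by ring⟩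
  · rintro _ ⟨s, hs, t, ht, rfl⟩ _ ⟨s', hs', t', ht', rfl⟩
    exact ⟨s * s' + x ^ 2 * (t * t'), h.add _ (h.mul _ hs _ hs') _ (h.mul _ (h.sq x) _ (h.mul _ ht _ ht')),
      s * t' + s' * t, h.add _ (h.mul _ hs _ ht') _ (h.mul _ hs' _ ht), by ring⟩

structure IsOrd {A : Type*} [CommRing A] (P : Set A) : Prop extends IsPre P where
  neg_one : (-1 : A) ∉ P
  total : ∀ x, x ∈ P ∨ -x ∈ P
  prime : ∀ x y, x * y ∈ P → -(x * y) ∈ P → (x ∈ P ∧ -x ∈ P) ∨ (y ∈ P ∧ -y ∈ P)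

theorem exists_ordering {A : Type*} [CommRing A] (T : Set A) (hT : IsPre T) (h1 : (-1 : A) ∉ T) :
    ∃ P, T ⊆ P ∧ IsOrd P := by
  obtain ⟨P, hTP, hP⟩ := zorn_subset_nonempty {P : Set A | IsPre P ∧ (-1 : A) ∉ P} (by
    intro c hc hch hne
    refine ⟨⋃₀ c, ⟨⟨?_, ?_, ?_⟩, ?_⟩, fun s hs => Set.subset_sUnion_of_mem hs⟩
    · intro x
      obtain ⟨s, hs⟩ := hne
      exact ⟨s, hs, (hc hs).1.sq x⟩
    · rintro x ⟨s, hs, hx⟩ y ⟨t, ht, hy⟩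
      rcases hch.total hs ht with h | h
      · exact ⟨t, ht, (hc ht).1.add _ (h hx) _ hy⟩
      · exact ⟨s, hs, (hc hs).1.add _ hx _ (h hy)⟩
    · rintro x ⟨s, hs, hx⟩ y ⟨t, ht, hy⟩
      rcases hch.total hs ht with h | h
      · exact ⟨t, ht, (hc ht).1.mul _ (h hx) _ hy⟩
      · exact ⟨s, hs, (hc hs).1.mul _ hx _ (h hy)⟩
    · rintro ⟨s, hs, hx⟩
      exact (hc hs).2 hx) T ⟨hT, h1⟩
  have hpre := hP.prop.1
  have hm1 := hP.prop.2
  have key : ∀ x, x ∉ P → ∃ s ∈ P, ∃ t ∈ P, (-1 : A) = s + x * t := by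
    intro x hx
    by_contra hcon
    have := hP.le_of_ge (y := {z | ∃ s ∈ P, ∃ t ∈ P, z = s + x * t}) ⟨hpre.adjoin x, hcon⟩
      (fun s hs => ⟨s, hs, 0, hpre.zero, by ring⟩)
    exact hx (this ⟨0, hpre.zero, 1, hpre.one, by ring⟩)
  have key2 : ∀ x y, x ∉ P → y ∉ P → -(x * y) ∈ P → False := by
    intro x y hx hy hxy
    obtain ⟨s, hs, t, ht, e⟩ := key x hx
    obtain ⟨s', hs', t', ht', e'⟩ := key y hy
    apply hm1
    have : (-1 : A) = s + s' + s * s' + -(x * y) * (t * t') := by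
      linear_combination (1 + s') * e - (x * t) * e'
    rw [this]
    exact hpre.add _ (hpre.add _ (hpre.add _ hs _ hs') _ (hpre.mul _ hs _ hs')) _
      (hpre.mul _ hxy _ (hpre.mul _ ht _ ht'))
  refine ⟨P, hTP, hpre, hm1, ?_, ?_⟩
  · intro x
    by_contra! h
    exact key2 x (-x) h.1 h.2 (by have := hpre.sq x; ring_nf; exact this)
  · intro x y hxy hxy'
    by_contra! h
    by_cases hx : x ∈ P
    · have hx' := h.1 hx
      by_cases hy : y ∈ P
      · exact key2 _ _ hx' (h.2 hy) (by simpa using hxy')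
      · exact key2 _ _ hx' hy (by simpa using hxy)
    · by_cases hy : y ∈ P
      · exact key2 _ _ hx (h.2 hy) (by simpa using hxy)
      · exact key2 _ _ hx hy (by simpa using hxy')

/-- weighted sums of squares of univariate polynomials -/
def wsos (K : Type*) [Field K] [LinearOrder K] : AddSubmonoid (Polynomial K) :=
  AddSubmonoid.closure {f | ∃ (c : K) (h : Polynomial K), 0 ≤ c ∧ f = Polynomial.C c * h ^ 2}

theorem wsos_mul {K : Type*} [Field K] [LinearOrder K] [IsStrictOrderedRing K]
    (s t : Polynomial K) (hs : s ∈ wsos K) (ht : t ∈ wsos K) : s * t ∈ wsos K := by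
  induction hs using AddSubmonoid.closure_induction with
  | mem x hx =>
    obtain ⟨c, h, hc, rfl⟩ := hx
    induction ht using AddSubmonoid.closure_induction with
    | mem y hy =>
      obtain ⟨c', h', hc', rfl⟩ := hy
      refine AddSubmonoid.subset_closure ⟨c * c', h * h', mul_nonneg hc hc', ?_⟩
      rw [Polynomial.C_mul]; ring
    | zero => rw [mul_zero]; exact zero_mem _
    | add x y _ _ hx hy => rw [mul_add]; exact add_mem hx hy
  | zero => rw [zero_mul]; exact zero_mem _
  | add x y _ _ hx hy => rw [add_mul]; exact add_mem hx hy

theorem wsos_eval {K : Type*} [Field K] [LinearOrder K] [IsStrictOrderedRing K]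
    (s : Polynomial K) (hs : s ∈ wsos K) (a : K) : 0 ≤ s.eval a := by
  induction hs using AddSubmonoid.closure_induction with
  | mem x hx =>
    obtain ⟨c, h, hc, rfl⟩ := hx
    simp only [Polynomial.eval_mul, Polynomial.eval_C, Polynomial.eval_pow]
    positivity
  | zero => simp
  | add x y _ _ hx hy => rw [Polynomial.eval_add]; positivity

theorem wsos_reduce {K : Type*} [Field K] [LinearOrder K] [IsStrictOrderedRing K]
    (p : Polynomial K) (hp : 0 < p.natDegree) (s : Polynomial K) (hs : s ∈ wsos K) :
    ∃ s' ∈ wsos K, p ∣ s - s' ∧ s'.natDegree + 2 ≤ 2 * p.natDegree := by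
  induction hs using AddSubmonoid.closure_induction with
  | mem x hx =>
    obtain ⟨c, h, hc, rfl⟩ := hx
    refine ⟨Polynomial.C c * (h % p) ^ 2, AddSubmonoid.subset_closure ⟨c, _, hc, rfl⟩, ?_, ?_⟩
    · refine ⟨Polynomial.C c * (h / p) * (h + h % p), ?_⟩
      have := EuclideanDomain.div_add_mod h p
      linear_combination (- Polynomial.C c * (h + h % p)) * this
    · have h1 : (h % p).natDegree < p.natDegree := Polynomial.natDegree_mod_lt h hp.ne'
      have h2 := Polynomial.natDegree_C_mul_le c ((h % p) ^ 2)
      have h3 := Polynomial.natDegree_pow_le (p := h % p) (n := 2)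
      omega
  | zero => exact ⟨0, zero_mem _, by simp, by simp; omega⟩
  | add x y _ _ hx hy =>
    obtain ⟨x', hx', dx, lx⟩ := hx
    obtain ⟨y', hy', dy, ly⟩ := hy
    refine ⟨x' + y', add_mem hx' hy', ?_, ?_⟩
    · have := dvd_add dx dy
      convert this using 1; ring
    · have := Polynomial.natDegree_add_le x' y'
      omega

theorem not_dvd_wsos {K : Type*} [Field K] [LinearOrder K] [IsStrictOrderedRing K] (a b : K) :
    ∀ (d : ℕ) (p : Polynomial K), p.natDegree = d → p.eval a * p.eval b < 0 →
      ∀ s ∈ wsos K, ¬ p ∣ 1 + s := by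
  intro d
  induction d using Nat.strong_induction_on with
  | _ d ih =>
  intro p hd hab s hs hdvd
  have hpos : 0 < p.natDegree := by
    by_contra h
    rw [Polynomial.eq_C_of_natDegree_eq_zero (by omega : p.natDegree = 0)] at hab
    simp only [Polynomial.eval_C] at hab
    nlinarith [mul_self_nonneg (p.coeff 0)]
  obtain ⟨s', hs', hd', hl⟩ := wsos_reduce p hpos s hs
  have hdvd' : p ∣ 1 + s' := by
    have := dvd_sub hdvd hd'
    convert this using 1; ring
  obtain ⟨q, hq⟩ := hdvd'
  have ea := congrArg (Polynomial.eval a) hq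
  have eb := congrArg (Polynomial.eval b) hq
  simp only [Polynomial.eval_add, Polynomial.eval_one, Polynomial.eval_mul] at ea eb
  have pa := wsos_eval s' hs' a
  have pb := wsos_eval s' hs' b
  have hqab : q.eval a * q.eval b < 0 := by
    have h1 : 0 < p.eval a * q.eval a := by linarith
    have h2 : 0 < p.eval b * q.eval b := by linarith
    have h3 : 0 < (p.eval a * p.eval b) * (q.eval a * q.eval b) := by
      have := mul_pos h1 h2
      linarith [this]
    by_contra h
    push Not at h
    nlinarith [mul_nonneg h (neg_nonneg.2 hab.le)]
  have hq0 : q ≠ 0 := by rintro rfl; simp at hqab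
  have hp0 : p ≠ 0 := by rintro rfl; simp at hpos
  have hdeg := Polynomial.natDegree_mul hp0 hq0
  rw [← hq] at hdeg
  have h1 := Polynomial.natDegree_add_le (1 : Polynomial K) s'
  rw [Polynomial.natDegree_one] at h1
  have : q.natDegree < d := by omega
  exact ih _ this q rfl hqab s' hs' ⟨p, by rw [hq]; ring⟩

def HasIVT (R : Type*) [Field R] [LinearOrder R] : Prop :=
  ∀ (p : Polynomial R) (a b : R), a < b → p.eval a * p.eval b < 0 →
    ∃ c, a < c ∧ c < b ∧ p.eval c = 0

/-- ordering extends to adjunction of a root of a polynomial with a sign change -/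
theorem exists_ord_adjoinRoot {K : Type*} [Field K] [LinearOrder K] [IsStrictOrderedRing K]
    (p : Polynomial K) (a b : K) (hab : p.eval a * p.eval b < 0) :
    ∃ P : Set (AdjoinRoot p), IsOrd P ∧ ∀ c : K, 0 ≤ c → AdjoinRoot.of p c ∈ P := by
  have hpre : IsPre (AdjoinRoot.mk p '' (wsos K : Set (Polynomial K))) := by
    refine ⟨?_, ?_, ?_⟩
    · intro x
      obtain ⟨h, rfl⟩ := AdjoinRoot.mk_surjective x
      exact ⟨h ^ 2, AddSubmonoid.subset_closure ⟨1, h, zero_le_one, by simp⟩, by simp⟩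
    · rintro _ ⟨x, hx, rfl⟩ _ ⟨y, hy, rfl⟩
      exact ⟨x + y, add_mem hx hy, by simp⟩
    · rintro _ ⟨x, hx, rfl⟩ _ ⟨y, hy, rfl⟩
      exact ⟨x * y, wsos_mul _ _ hx hy, by simp⟩
  obtain ⟨P, hsub, hP⟩ := exists_ordering _ hpre (by
    rintro ⟨s, hs, e⟩
    apply not_dvd_wsos a b _ p rfl hab s hs
    rw [← AdjoinRoot.mk_eq_zero, map_add, e, map_one]; ring)
  refine ⟨P, hP, fun c hc => hsub ⟨Polynomial.C c, AddSubmonoid.subset_closure ⟨c, 1, hc, by simp⟩, rfl⟩⟩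

structure IsCone {C : Type*} [CommRing C] (P : Set C) : Prop where
  zero : (0 : C) ∈ P
  one : (1 : C) ∈ P
  add : ∀ x ∈ P, ∀ y ∈ P, x + y ∈ P
  mul : ∀ x ∈ P, ∀ y ∈ P, x * y ∈ P
  salient : ∀ x ∈ P, -x ∈ P → x = 0
  total : ∀ x ∈ P, ∀ y ∈ P, x - y ∈ P ∨ y - x ∈ P

theorem IsCone.frac {C : Type*} [Field C] {P : Set C} (h : IsCone P) :
    IsCone {z | ∃ u ∈ P, ∃ v ∈ P, v ≠ 0 ∧ z * v = u} := by
  refine ⟨⟨0, h.zero, 1, h.one, one_ne_zero, by simp⟩, ⟨1, h.one, 1, h.one, one_ne_zero, by simp⟩,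
    ?_, ?_, ?_, ?_⟩
  · rintro z ⟨u, hu, v, hv, hv0, e⟩ z' ⟨u', hu', v', hv', hv0', e'⟩
    exact ⟨u * v' + u' * v, h.add _ (h.mul _ hu _ hv') _ (h.mul _ hu' _ hv), v * v',
      h.mul _ hv _ hv', mul_ne_zero hv0 hv0', by rw [← e, ← e']; ring⟩
  · rintro z ⟨u, hu, v, hv, hv0, e⟩ z' ⟨u', hu', v', hv', hv0', e'⟩
    exact ⟨u * u', h.mul _ hu _ hu', v * v',
      h.mul _ hv _ hv', mul_ne_zero hv0 hv0', by rw [← e, ← e']; ring⟩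
  · rintro z ⟨u, hu, v, hv, hv0, e⟩ ⟨u', hu', v', hv', hv0', e'⟩
    have : u * v' = 0 := h.salient _ (h.mul _ hu _ hv') (by
      have : -(u * v') = u' * v := by rw [← e, ← e']; ring
      rw [this]; exact h.mul _ hu' _ hv)
    rw [← e] at this
    simpa [hv0, hv0'] using this
  · rintro z ⟨u, hu, v, hv, hv0, e⟩ z' ⟨u', hu', v', hv', hv0', e'⟩
    rcases h.total _ (h.mul _ hu _ hv') _ (h.mul _ hu' _ hv) with h1 | h1
    · exact Or.inl ⟨_, h1, v * v', h.mul _ hv _ hv', mul_ne_zero hv0 hv0', by rw [← e, ← e']; ring⟩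
    · exact Or.inr ⟨_, h1, v * v', h.mul _ hv _ hv', mul_ne_zero hv0 hv0', by rw [← e, ← e']; ring⟩

/-- the subfield `P ∪ -P` -/
def coneField {C : Type*} [Field C] (P : Set C) (h : IsCone P) (hinv : ∀ x ∈ P, x⁻¹ ∈ P) :
    Subfield C where
  carrier := {x | x ∈ P ∨ -x ∈ P}
  mul_mem' := by
    rintro a b (ha | ha) (hb | hb)
    · exact Or.inl (h.mul _ ha _ hb)
    · right; have := h.mul _ ha _ hb; simpa using this
    · right; have := h.mul _ ha _ hb; simpa using this
    · left; have := h.mul _ ha _ hb; simpa using this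
  one_mem' := Or.inl h.one
  add_mem' := by
    rintro a b (ha | ha) (hb | hb)
    · exact Or.inl (h.add _ ha _ hb)
    · have := h.total _ ha _ hb
      rcases this with h | h
      · left; simpa using h
      · right; convert h using 1; ring
    · have := h.total _ ha _ hb
      rcases this with h | h
      · right; convert h using 1; ring
      · left; convert h using 1; ring
    · right; convert h.add _ ha _ hb using 1; ring
  zero_mem' := Or.inl h.zero
  neg_mem' := by
    rintro a (ha | ha)
    · right; simpa using ha
    · left; exact ha
  inv_mem' := by
    rintro a (ha | ha)
    · left; exact hinv _ ha
    · right; have := hinv _ ha; simpa [inv_neg] using this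

/-- the associated order -/
@[reducible] def coneOrder {C : Type*} [Field C] (P : Set C) (h : IsCone P) (hinv : ∀ x ∈ P, x⁻¹ ∈ P) :
    LinearOrder (coneField P h hinv) where
  le x y := (y : C) - x ∈ P
  le_refl x := by simpa using h.zero
  le_trans x y z h1 h2 := by
    have := h.add _ h1 _ h2
    show (z : C) - x ∈ P
    convert this using 1; ring
  le_antisymm x y h1 h2 := by
    have := h.salient _ h1 (by rw [neg_sub]; exact h2)
    exact (Subtype.ext (sub_eq_zero.1 this)).symm
  le_total x y := by
    rcases (y - x).2 with h | h
    · left; simpa using h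
    · right; simpa using h
  toDecidableLE := Classical.decRel _

theorem coneOrder_strict {C : Type*} [Field C] (P : Set C) (h : IsCone P)
    (hinv : ∀ x ∈ P, x⁻¹ ∈ P) :
    letI := coneOrder P h hinv
    IsStrictOrderedRing (coneField P h hinv) := by
  letI := coneOrder P h hinv
  have hle : ∀ x y : coneField P h hinv, x ≤ y ↔ (y : C) - x ∈ P := fun _ _ => Iff.rfl
  haveI : IsOrderedAddMonoid (coneField P h hinv) :=
    { add_le_add_left := fun a b hab c => (hle _ _).2 (by
        have := (hle _ _).1 hab
        convert this using 1
        push_cast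
        ring) }
  haveI : ZeroLEOneClass (coneField P h hinv) := ⟨by
    rw [hle]; simpa using h.one⟩
  haveI : IsOrderedRing (coneField P h hinv) := .of_mul_nonneg fun x y hx hy => by
    rw [hle] at hx hy ⊢
    simpa using h.mul _ hx _ hy
  exact IsOrderedRing.toIsStrictOrderedRing _

set_option maxHeartbeats 1000000 in
theorem exists_rcf {C : Type*} [Field C] [IsAlgClosed C] (P₀ : Set C) (h₀ : IsCone P₀) :
    ∃ (E : Subfield C) (_ : LinearOrder E) (_ : IsStrictOrderedRing E), HasIVT E ∧
      ∀ x ∈ P₀, ∃ h : x ∈ E, 0 ≤ (⟨x, h⟩ : E) := by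
  obtain ⟨P, h0P, hP⟩ := zorn_subset_nonempty {P : Set C | IsCone P} (by
    intro c hc hch hne
    have two : ∀ x ∈ ⋃₀ c, ∀ y ∈ ⋃₀ c, ∃ s ∈ c, x ∈ s ∧ y ∈ s := by
      rintro x ⟨s, hs, hx⟩ y ⟨t, ht, hy⟩
      rcases hch.total hs ht with h | h
      · exact ⟨t, ht, h hx, hy⟩
      · exact ⟨s, hs, hx, h hy⟩
    refine ⟨⋃₀ c, ⟨?_, ?_, ?_, ?_, ?_, ?_⟩, fun s hs => Set.subset_sUnion_of_mem hs⟩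
    · obtain ⟨s, hs⟩ := hne
      exact ⟨s, hs, (hc hs).zero⟩
    · obtain ⟨s, hs⟩ := hne
      exact ⟨s, hs, (hc hs).one⟩
    · intro x hx y hy
      obtain ⟨s, hs, hx, hy⟩ := two x hx y hy
      exact ⟨s, hs, (hc hs).add _ hx _ hy⟩
    · intro x hx y hy
      obtain ⟨s, hs, hx, hy⟩ := two x hx y hy
      exact ⟨s, hs, (hc hs).mul _ hx _ hy⟩
    · intro x hx y
      obtain ⟨s, hs, hx, hy⟩ := two x hx _ y
      exact (hc hs).salient _ hx hy
    · intro x hx y hy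
      obtain ⟨s, hs, hx, hy⟩ := two x hx y hy
      rcases (hc hs).total _ hx _ hy with h | h
      · exact Or.inl ⟨s, hs, h⟩
      · exact Or.inr ⟨s, hs, h⟩) P₀ h₀
  have hc : IsCone P := hP.prop
  have hinv : ∀ x ∈ P, x⁻¹ ∈ P := by
    intro x hx
    by_cases hx0 : x = 0
    · rw [hx0, inv_zero]; exact hc.zero
    · exact hP.le_of_ge (y := {z | ∃ u ∈ P, ∃ v ∈ P, v ≠ 0 ∧ z * v = u}) hc.frac
        (fun z hz => ⟨z, hz, 1, hc.one, one_ne_zero, mul_one z⟩) ⟨1, hc.one, x, hx, hx0, by simp [hx0]⟩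
  letI := coneOrder P hc hinv
  haveI := coneOrder_strict P hc hinv
  have hnn : ∀ x : coneField P hc hinv, 0 ≤ x ↔ (x : C) ∈ P := fun x => by
    show (x : C) - 0 ∈ P ↔ _
    rw [sub_zero]
  refine ⟨coneField P hc hinv, inferInstance, inferInstance, ?_, fun x hx => ⟨Or.inl (h0P hx), ?_⟩⟩
  · -- IVT
    have main : ∀ (d : ℕ) (p : Polynomial (coneField P hc hinv)) (a b : coneField P hc hinv),
        p.natDegree = d → a < b → p.eval a * p.eval b < 0 → ∃ c, a < c ∧ c < b ∧ p.eval c = 0 := by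
      intro d
      induction d using Nat.strong_induction_on with
      | _ d ih =>
      intro p a b hd hab hp
      have hp0 : p ≠ 0 := by rintro rfl; simp at hp
      have hpu : ¬ IsUnit p := by
        intro hu
        obtain ⟨c, -, rfl⟩ := Polynomial.isUnit_iff.1 hu
        simp only [Polynomial.eval_C] at hp
        nlinarith [mul_self_nonneg c]
      by_cases hirr : Irreducible p
      · -- irreducible case
        haveI : Fact (Irreducible p) := ⟨hirr⟩
        obtain ⟨Q, hQ, hQc⟩ := exists_ord_adjoinRoot p a b hp
        obtain ⟨α, hα⟩ := IsAlgClosed.exists_aeval_eq_zero C p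
          (Polynomial.degree_pos_of_irreducible hirr).ne'
        let j : AdjoinRoot p →+* C := AdjoinRoot.lift (algebraMap (coneField P hc hinv) C) α hα
        have hjr : j (AdjoinRoot.root p) = α := AdjoinRoot.lift_root hα
        have hQs : ∀ x ∈ Q, -x ∈ Q → x = 0 := by
          intro x hx hx'
          by_contra hx0
          apply hQ.neg_one
          have : (-1 : AdjoinRoot p) = (-x) * x * (x⁻¹) ^ 2 := by field_simp
          rw [this]
          exact hQ.mul _ (hQ.mul _ hx' _ hx) _ (hQ.sq _)
        have hcone : IsCone (j '' Q) := by
          refine ⟨⟨0, hQ.zero, map_zero j⟩, ⟨1, hQ.one, map_one j⟩, ?_, ?_, ?_, ?_⟩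
          · rintro _ ⟨x, hx, rfl⟩ _ ⟨y, hy, rfl⟩
            exact ⟨x + y, hQ.add _ hx _ hy, map_add j _ _⟩
          · rintro _ ⟨x, hx, rfl⟩ _ ⟨y, hy, rfl⟩
            exact ⟨x * y, hQ.mul _ hx _ hy, map_mul j _ _⟩
          · rintro _ ⟨x, hx, rfl⟩ ⟨y, hy, e⟩
            rw [← map_neg] at e
            have := j.injective e
            rw [this] at hy
            rw [hQs x hx hy, map_zero]
          · rintro _ ⟨x, hx, rfl⟩ _ ⟨y, hy, rfl⟩
            rcases hQ.total (x - y) with h | h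
            · exact Or.inl ⟨_, h, map_sub j _ _⟩
            · exact Or.inr ⟨_, h, by rw [neg_sub, map_sub]⟩
        have hsub : j '' Q ⊆ P := hP.le_of_ge hcone (fun x hx =>
          ⟨AdjoinRoot.of p ⟨x, Or.inl hx⟩, hQc _ ((hnn _).2 hx), AdjoinRoot.lift_of hα⟩)
        have hαE : α ∈ coneField P hc hinv := by
          rcases hQ.total (AdjoinRoot.root p) with h | h
          · left; apply hsub; exact ⟨_, h, hjr⟩
          · right; apply hsub; exact ⟨_, h, by rw [map_neg, hjr]⟩
        have hroot : p.eval ⟨α, hαE⟩ = 0 := by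
          have h1 : Polynomial.aeval (algebraMap (coneField P hc hinv) C ⟨α, hαE⟩) p = 0 := hα
          rw [Polynomial.aeval_algebraMap_apply] at h1
          have := (algebraMap (coneField P hc hinv) C).injective (h1.trans (map_zero _).symm)
          simpa using this
        set e : coneField P hc hinv := ⟨α, hαE⟩ with he
        have hdv : (Polynomial.X - Polynomial.C e) ∣ p := Polynomial.dvd_iff_isRoot.2 hroot
        have hass := (Polynomial.irreducible_X_sub_C e).associated_of_dvd hirr hdv
        obtain ⟨u, hu⟩ := hass
        obtain ⟨c, -, hcu⟩ := Polynomial.isUnit_iff.1 u.isUnit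
        rw [← hcu] at hu
        refine ⟨e, ?_, ?_, hroot⟩
        · by_contra hle
          push Not at hle
          rw [← hu] at hp
          simp only [Polynomial.eval_mul, Polynomial.eval_sub, Polynomial.eval_X, Polynomial.eval_C] at hp
          have := mul_nonneg (sub_nonneg.2 hle) (sub_nonneg.2 (hle.trans hab.le))
          nlinarith [mul_nonneg this (mul_self_nonneg c)]
        · by_contra hle
          push Not at hle
          rw [← hu] at hp
          simp only [Polynomial.eval_mul, Polynomial.eval_sub, Polynomial.eval_X, Polynomial.eval_C] at hp
          have := mul_nonneg (sub_nonneg.2 hle) (sub_nonneg.2 (hab.le.trans hle))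
          nlinarith [mul_nonneg this (mul_self_nonneg c)]
      · rw [irreducible_iff] at hirr
        push Not at hirr
        obtain ⟨f, g, hfg, hf, hg⟩ := hirr hpu
        have hf0 : f ≠ 0 := by rintro rfl; simp [hfg] at hp0
        have hg0 : g ≠ 0 := by rintro rfl; simp [hfg] at hp0
        have hfd : 0 < f.natDegree := by
          rcases Nat.eq_zero_or_pos f.natDegree with h | h
          · exact absurd (Polynomial.isUnit_iff_degree_eq_zero.2
              (by rw [Polynomial.degree_eq_natDegree hf0, h]; rfl)) hf
          · exact h
        have hgd : 0 < g.natDegree := by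
          rcases Nat.eq_zero_or_pos g.natDegree with h | h
          · exact absurd (Polynomial.isUnit_iff_degree_eq_zero.2
              (by rw [Polynomial.degree_eq_natDegree hg0, h]; rfl)) hg
          · exact h
        have hdeg := Polynomial.natDegree_mul hf0 hg0
        rw [← hfg, hd] at hdeg
        rw [hfg, Polynomial.eval_mul, Polynomial.eval_mul] at hp
        by_cases hfs : f.eval a * f.eval b < 0
        · obtain ⟨c, h1, h2, h3⟩ := ih _ (by omega) f a b rfl hab hfs
          exact ⟨c, h1, h2, by rw [hfg, Polynomial.eval_mul, h3, zero_mul]⟩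
        · have hgs : g.eval a * g.eval b < 0 := by
            by_contra hgs
            push Not at hfs hgs
            have := mul_nonneg hfs hgs
            rw [mul_mul_mul_comm] at hp
            exact absurd hp (not_lt.2 this)
          obtain ⟨c, h1, h2, h3⟩ := ih _ (by omega) g a b rfl hab hgs
          exact ⟨c, h1, h2, by rw [hfg, Polynomial.eval_mul, h3, mul_zero]⟩
    exact fun p a b hab hp => main _ p a b rfl hab hp
  · exact (hnn _).2 (h0P hx)

theorem exists_rcf_of_ord {A : Type} [CommRing A] (P : Set A) (hP : IsOrd P) :
    ∃ (R : Type) (_ : Field R) (_ : LinearOrder R) (_ : IsStrictOrderedRing R),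
      HasIVT R ∧ ∃ φ : A →+* R, ∀ x ∈ P, 0 ≤ φ x := by
  let I : Ideal A :=
    { carrier := {x | x ∈ P ∧ -x ∈ P}
      add_mem' := by
        rintro a b ⟨h1, h2⟩ ⟨h3, h4⟩
        exact ⟨hP.add _ h1 _ h3, by rw [neg_add]; exact hP.add _ h2 _ h4⟩
      zero_mem' := ⟨hP.zero, by simpa using hP.zero⟩
      smul_mem' := by
        rintro c x ⟨h1, h2⟩
        rcases hP.total c with h | h
        · exact ⟨hP.mul _ h _ h1, by simpa using hP.mul _ h _ h2⟩
        · exact ⟨by simpa using hP.mul _ h _ h2, by simpa using hP.mul _ h _ h1⟩ }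
  have hI : I.IsPrime := ⟨fun h => by
      have : (1 : A) ∈ I := by rw [h]; trivial
      exact hP.neg_one this.2, fun {x y} h => hP.prime x y h.1 h.2⟩
  let F := FractionRing (A ⧸ I)
  let C := AlgebraicClosure F
  let ψ : A →+* C := ((algebraMap F C).comp (algebraMap (A ⧸ I) F)).comp (Ideal.Quotient.mk I)
  have hψ : ∀ x, ψ x = 0 → x ∈ I := by
    intro x hx
    have h1 := (algebraMap F C).injective ((show algebraMap F C (algebraMap (A ⧸ I) F (Ideal.Quotient.mk I x)) = 0 from hx).trans (map_zero _).symm)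
    have h2 := (IsFractionRing.injective (A ⧸ I) F) (h1.trans (map_zero _).symm)
    exact Ideal.Quotient.eq_zero_iff_mem.1 h2
  have hcone : IsCone (ψ '' P) := by
    refine ⟨⟨0, hP.zero, map_zero ψ⟩, ⟨1, hP.one, map_one ψ⟩, ?_, ?_, ?_, ?_⟩
    · rintro _ ⟨x, hx, rfl⟩ _ ⟨y, hy, rfl⟩
      exact ⟨x + y, hP.add _ hx _ hy, map_add ψ _ _⟩
    · rintro _ ⟨x, hx, rfl⟩ _ ⟨y, hy, rfl⟩
      exact ⟨x * y, hP.mul _ hx _ hy, map_mul ψ _ _⟩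
    · rintro _ ⟨x, hx, rfl⟩ ⟨y, hy, e⟩
      have h1 : x + y ∈ I := hψ _ (by rw [map_add, e]; ring)
      have h2 : -x ∈ P := by
        have := hP.add _ h1.2 _ hy
        convert this using 1; ring
      have h3 : x ∈ I := ⟨hx, h2⟩
      show algebraMap F C (algebraMap (A ⧸ I) F (Ideal.Quotient.mk I x)) = 0
      rw [Ideal.Quotient.eq_zero_iff_mem.2 h3, map_zero, map_zero]
    · rintro _ ⟨x, hx, rfl⟩ _ ⟨y, hy, rfl⟩
      rcases hP.total (x - y) with h | h
      · exact Or.inl ⟨_, h, map_sub ψ _ _⟩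
      · exact Or.inr ⟨_, h, by rw [neg_sub, map_sub]⟩
  obtain ⟨E, lo, so, hivt, hE⟩ := exists_rcf _ hcone
  have hmem : ∀ x, ψ x ∈ E := by
    intro x
    rcases hP.total x with h | h
    · exact (hE _ ⟨x, h, rfl⟩).1
    · have := (hE _ ⟨-x, h, rfl⟩).1
      rw [map_neg] at this
      exact neg_mem_iff.1 this
  refine ⟨E, inferInstance, lo, so, hivt, ψ.codRestrict E hmem, fun x hx => ?_⟩
  exact (hE _ ⟨x, hx, rfl⟩).2

theorem HasIVT.same_sign {R : Type*} [Field R] [LinearOrder R] [IsStrictOrderedRing R]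
    (hR : HasIVT R) (p : Polynomial R) {a b : R} (hab : a < b)
    (h : ∀ c, a ≤ c → c ≤ b → p.eval c ≠ 0) : 0 < p.eval a * p.eval b := by
  by_contra hn
  have h1 : p.eval a * p.eval b < 0 :=
    lt_of_le_of_ne (not_lt.1 hn) (mul_ne_zero (h a le_rfl hab.le) (h b hab.le le_rfl))
  obtain ⟨c, h2, h3, h4⟩ := hR p a b hab h1
  exact h c h2.le h3.le h4

theorem sign_eq_of_mul_pos {R : Type*} [Field R] [LinearOrder R] [IsStrictOrderedRing R]
    {x y : R} (h : 0 < x * y) : SignType.sign x = SignType.sign y := by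
  rcases mul_pos_iff.1 h with ⟨h1, h2⟩ | ⟨h1, h2⟩
  · rw [sign_pos h1, sign_pos h2]
  · rw [sign_neg h1, sign_neg h2]

theorem HasIVT.sign_le {R : Type*} [Field R] [LinearOrder R] [IsStrictOrderedRing R]
    (hR : HasIVT R) (p : Polynomial R) {a b : R} (hab : a ≤ b)
    (h : ∀ c, a ≤ c → c ≤ b → p.eval c ≠ 0) :
    SignType.sign (p.eval a) = SignType.sign (p.eval b) := by
  rcases hab.eq_or_lt with rfl | hab
  · rfl
  · exact sign_eq_of_mul_pos (hR.same_sign p hab h)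

theorem HasIVT.sign_const {R : Type*} [Field R] [LinearOrder R] [IsStrictOrderedRing R]
    (hR : HasIVT R) (p : Polynomial R) (h : ∀ c, p.eval c ≠ 0) (a b : R) :
    SignType.sign (p.eval a) = SignType.sign (p.eval b) := by
  rcases le_total a b with hab | hab
  · exact hR.sign_le p hab (fun c _ _ => h c)
  · exact (hR.sign_le p hab (fun c _ _ => h c)).symm

theorem HasIVT.rolle {R : Type*} [Field R] [LinearOrder R] [IsStrictOrderedRing R]
    (hR : HasIVT R) (p : Polynomial R) (hp : p ≠ 0) {a b : R} (hab : a < b)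
    (ha : p.eval a = 0) (hb : p.eval b = 0) :
    ∃ c, a < c ∧ c < b ∧ p.derivative.eval c = 0 := by
  classical
  have hne : (p.roots.toFinset.filter (fun x => a < x)).Nonempty :=
    ⟨b, by simp [hp, hb, hab]⟩
  obtain ⟨b', hb', hmin⟩ := Finset.exists_min_image _ id hne
  simp only [Finset.mem_filter, Multiset.mem_toFinset, Polynomial.mem_roots hp,
    Polynomial.IsRoot.def, id, and_imp] at hb' hmin
  obtain ⟨hb0, hab'⟩ := hb'
  have hb'b : b' ≤ b := hmin b hb hab
  obtain ⟨q1, hq1, hq1'⟩ := Polynomial.exists_eq_pow_rootMultiplicity_mul_and_not_dvd p hp a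
  set m := p.rootMultiplicity a with hm
  have hmpos : 0 < m := (Polynomial.rootMultiplicity_pos hp).2 ha
  have hq10 : q1 ≠ 0 := by rintro rfl; simp at hq1'
  have hq1b : q1.eval b' = 0 := by
    rw [hq1] at hb0
    simp only [Polynomial.eval_mul, Polynomial.eval_pow, Polynomial.eval_sub, Polynomial.eval_X,
      Polynomial.eval_C, mul_eq_zero, pow_eq_zero_iff hmpos.ne', sub_eq_zero] at hb0
    exact hb0.resolve_left hab'.ne'
  obtain ⟨q, hq, hq'⟩ := Polynomial.exists_eq_pow_rootMultiplicity_mul_and_not_dvd q1 hq10 b'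
  set n := q1.rootMultiplicity b' with hn
  have hnpos : 0 < n := (Polynomial.rootMultiplicity_pos hq10).2 hq1b
  rw [Polynomial.dvd_iff_isRoot, Polynomial.IsRoot.def] at hq1' hq'
  have hqa : q.eval a ≠ 0 := by
    intro h
    apply hq1'
    rw [hq, Polynomial.eval_mul, h, mul_zero]
  have hqno : ∀ c, a ≤ c → c ≤ b' → q.eval c ≠ 0 := by
    intro c h1 h2 h3
    have hpc : p.eval c = 0 := by
      rw [hq1, hq, Polynomial.eval_mul, Polynomial.eval_mul, h3, mul_zero, mul_zero]
    rcases h1.eq_or_lt with rfl | h1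
    · exact hqa h3
    · have := hmin c hpc h1
      have : c = b' := le_antisymm h2 this
      rw [this] at h3
      exact hq' h3
  have hs := hR.same_sign q hab' hqno
  obtain ⟨m', hm'⟩ : ∃ m', m = m' + 1 := ⟨m - 1, by omega⟩
  obtain ⟨n', hn'⟩ : ∃ n', n = n' + 1 := ⟨n - 1, by omega⟩
  let r : Polynomial R := Polynomial.C (m' + 1 : R) * (Polynomial.X - Polynomial.C b') * q
    + Polynomial.C (n' + 1 : R) * (Polynomial.X - Polynomial.C a) * q
    + (Polynomial.X - Polynomial.C a) * (Polynomial.X - Polynomial.C b') * q.derivative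
  have hder : p.derivative = (Polynomial.X - Polynomial.C a) ^ m' *
      (Polynomial.X - Polynomial.C b') ^ n' * r := by
    rw [hq1, hq, hm', hn']
    simp only [Polynomial.derivative_mul, Polynomial.derivative_pow, Polynomial.derivative_sub,
      Polynomial.derivative_X, Polynomial.derivative_C, r]
    simp only [Nat.add_sub_cancel, map_add, map_one, map_natCast, Nat.cast_add, Nat.cast_one]
    ring
  have hra : r.eval a = (m' + 1) * (a - b') * q.eval a := by simp [r]
  have hrb : r.eval b' = (n' + 1) * (b' - a) * q.eval b' := by simp [r]
  obtain ⟨c, h1, h2, h3⟩ := hR r a b' hab' (by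
    rw [hra, hrb]
    have h1 : (0 : R) < (m' + 1) * (n' + 1) := by positivity
    have h2 : 0 < (b' - a) * (b' - a) := mul_pos (sub_pos.2 hab') (sub_pos.2 hab')
    have := mul_pos (mul_pos h1 h2) hs
    linarith)
  exact ⟨c, h1, h2.trans_le hb'b, by rw [hder, Polynomial.eval_mul, h3, mul_zero]⟩

theorem HasIVT.simple_root {R : Type*} [Field R] [LinearOrder R] [IsStrictOrderedRing R]
    (hR : HasIVT R) (p : Polynomial R) (hp : p ≠ 0) {a b r : R} (har : a < r) (hrb : r < b)
    (hr : p.eval r = 0) (hd : ∀ c, a < c → c < b → p.derivative.eval c ≠ 0) :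
    ∃ s : SignType, s ≠ 0 ∧ ∀ x, a ≤ x → x ≤ b →
      SignType.sign (p.eval x) = SignType.sign (x - r) * s := by
  obtain ⟨q, hq⟩ := Polynomial.dvd_iff_isRoot.2 hr
  have hno : ∀ c, a ≤ c → c ≤ b → q.eval c ≠ 0 := by
    intro c h1 h2 h3
    have hpc : p.eval c = 0 := by rw [hq, Polynomial.eval_mul, h3, mul_zero]
    rcases lt_trichotomy c r with h | h | h
    · obtain ⟨x, hx1, hx2, hx3⟩ := hR.rolle p hp h hpc hr
      exact hd x (h1.trans_lt hx1) (hx2.trans hrb) hx3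
    · apply hd r har hrb
      rw [hq]
      simp [← h, h3]
    · obtain ⟨x, hx1, hx2, hx3⟩ := hR.rolle p hp h hr hpc
      exact hd x (har.trans hx1) (hx2.trans_le h2) hx3
  refine ⟨SignType.sign (q.eval b), ?_, fun x h1 h2 => ?_⟩
  · rw [Ne, sign_eq_zero_iff]; exact hno b (har.trans hrb).le le_rfl
  · rw [← hR.sign_le q h2 (fun c h3 h4 => hno c (h1.trans h3) h4), hq, Polynomial.eval_mul, sign_mul]
    simp

/-- Cauchy bound -/
theorem cauchy_bound {R : Type*} [Field R] [LinearOrder R] [IsStrictOrderedRing R]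
    (p : Polynomial R) (hp : p ≠ 0) (x : R) (hx : p.eval x = 0) :
    |x| ≤ 1 + (∑ i ∈ Finset.range p.natDegree, |p.coeff i|) / |p.leadingCoeff| := by
  have hlc : 0 < |p.leadingCoeff| := abs_pos.2 (Polynomial.leadingCoeff_ne_zero.2 hp)
  have hS : 0 ≤ ∑ i ∈ Finset.range p.natDegree, |p.coeff i| := Finset.sum_nonneg fun _ _ => abs_nonneg _
  have hSd := div_nonneg hS hlc.le
  rcases le_total |x| 1 with h1 | h1
  · linarith
  have hx0 : 0 < |x| := by linarith
  rw [Polynomial.eval_eq_sum_range, Finset.sum_range_succ] at hx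
  have hd : p.natDegree ≠ 0 := by
    intro h
    rw [h] at hx
    simp only [Finset.range_zero, Finset.sum_empty, pow_zero, mul_one, zero_add] at hx
    rw [Polynomial.leadingCoeff, h, hx, abs_zero] at hlc
    exact lt_irrefl _ hlc
  obtain ⟨k, hk⟩ := Nat.exists_eq_succ_of_ne_zero hd
  have e : p.leadingCoeff * x ^ p.natDegree = -∑ i ∈ Finset.range p.natDegree, p.coeff i * x ^ i := by
    rw [Polynomial.leadingCoeff]; linarith
  have h2 : |p.leadingCoeff| * |x| ^ p.natDegree ≤
      (∑ i ∈ Finset.range p.natDegree, |p.coeff i|) * |x| ^ k := by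
    rw [← abs_pow, ← abs_mul, e, abs_neg]
    refine (Finset.abs_sum_le_sum_abs _ _).trans ?_
    rw [Finset.sum_mul]
    refine Finset.sum_le_sum fun i hi => ?_
    rw [abs_mul, abs_pow]
    refine mul_le_mul_of_nonneg_left (pow_le_pow_right₀ h1 ?_) (abs_nonneg _)
    have := Finset.mem_range.1 hi
    omega
  have h3 : |p.leadingCoeff| * |x| ≤ ∑ i ∈ Finset.range p.natDegree, |p.coeff i| := by
    rw [hk, pow_succ, ← hk] at h2
    have hpow : 0 < |x| ^ k := pow_pos hx0 k
    refine le_of_mul_le_mul_right ?_ hpow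
    linarith
  have : |x| ≤ (∑ i ∈ Finset.range p.natDegree, |p.coeff i|) / |p.leadingCoeff| := by
    rw [le_div_iff₀ hlc]; linarith
  linarith

section transfer
variable {E R₁ R₂ : Type*} [Field E]
  [Field R₁] [LinearOrder R₁] [IsStrictOrderedRing R₁]
  [Field R₂] [LinearOrder R₂] [IsStrictOrderedRing R₂]

theorem lt_iff_of_sign (σ₁ : E →+* R₁) (σ₂ : E →+* R₂)
    (hs : ∀ e, SignType.sign (σ₁ e) = SignType.sign (σ₂ e)) (x y : E) :
    σ₁ x < σ₁ y ↔ σ₂ x < σ₂ y := by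
  have := hs (y - x)
  rw [map_sub σ₁, map_sub σ₂] at this
  rw [← sub_pos, ← sign_eq_one_iff, this, sign_eq_one_iff, sub_pos]

theorem sign_det (h₁ : HasIVT R₁) (h₂ : HasIVT R₂) (σ₁ : E →+* R₁) (σ₂ : E →+* R₂)
    (hs : ∀ e, SignType.sign (σ₁ e) = SignType.sign (σ₂ e)) (α : R₁) (β : R₂) :
    ∀ (d : ℕ) (g : Polynomial E), g.natDegree = d → g ≠ 0 →
      (∀ x, g.eval₂ σ₁ x = 0 → ∃ e, σ₁ e = x) → (∀ x, g.eval₂ σ₂ x = 0 → ∃ e, σ₂ e = x) →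
      (∀ z, g.eval z = 0 → SignType.sign (α - σ₁ z) = SignType.sign (β - σ₂ z)) →
      SignType.sign (g.eval₂ σ₁ α) = SignType.sign (g.eval₂ σ₂ β) := by
  intro d
  induction d with
  | zero =>
    intro g hd _ _ _ _
    rw [Polynomial.eq_C_of_natDegree_eq_zero hd]
    simp [hs]
  | succ d ih =>
    intro g hd hg0 hr₁ hr₂ hz
    by_cases hroot : ∃ z, g.eval z = 0
    · obtain ⟨z, hzr⟩ := hroot
      obtain ⟨q, hq⟩ := Polynomial.dvd_iff_isRoot.2 hzr
      have hq0 : q ≠ 0 := by rintro rfl; simp [hq] at hg0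
      have hqd : q.natDegree = d := by
        have := Polynomial.natDegree_mul (Polynomial.X_sub_C_ne_zero z) hq0
        rw [← hq, hd, Polynomial.natDegree_X_sub_C] at this
        omega
      have := ih q hqd hq0
        (fun x hx => hr₁ x (by rw [hq, Polynomial.eval₂_mul, hx, mul_zero]))
        (fun x hx => hr₂ x (by rw [hq, Polynomial.eval₂_mul, hx, mul_zero]))
        (fun w hw => hz w (by rw [hq, Polynomial.eval_mul, hw, mul_zero]))
      rw [hq, Polynomial.eval₂_mul, Polynomial.eval₂_mul, sign_mul, sign_mul, this]
      simp [hz z hzr]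
    · push Not at hroot
      have a1 : SignType.sign (g.eval₂ σ₁ α) = SignType.sign (g.eval₂ σ₁ (σ₁ 0)) := by
        rw [← Polynomial.eval_map, ← Polynomial.eval_map]
        apply h₁.sign_const
        intro c hc
        rw [Polynomial.eval_map] at hc
        obtain ⟨e, rfl⟩ := hr₁ c hc
        rw [Polynomial.eval₂_at_apply, map_eq_zero] at hc
        exact hroot e hc
      have a2 : SignType.sign (g.eval₂ σ₂ β) = SignType.sign (g.eval₂ σ₂ (σ₂ 0)) := by
        rw [← Polynomial.eval_map, ← Polynomial.eval_map]
        apply h₂.sign_const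
        intro c hc
        rw [Polynomial.eval_map] at hc
        obtain ⟨e, rfl⟩ := hr₂ c hc
        rw [Polynomial.eval₂_at_apply, map_eq_zero] at hc
        exact hroot e hc
      rw [a1, a2, Polynomial.eval₂_at_apply, Polynomial.eval₂_at_apply, hs]

theorem root_step (h₁ : HasIVT R₁) (h₂ : HasIVT R₂) (σ₁ : E →+* R₁) (σ₂ : E →+* R₂)
    (hs : ∀ e, SignType.sign (σ₁ e) = SignType.sign (σ₂ e)) (h : Polynomial E) (h0 : h ≠ 0)
    (ih₁ : ∀ g : Polynomial E, g ≠ 0 → g.natDegree < h.natDegree →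
      ∀ x, g.eval₂ σ₁ x = 0 → ∃ e, σ₁ e = x)
    (ih₂ : ∀ g : Polynomial E, g ≠ 0 → g.natDegree < h.natDegree →
      ∀ x, g.eval₂ σ₂ x = 0 → ∃ e, σ₂ e = x)
    (α : R₁) (hα : h.eval₂ σ₁ α = 0) (hα' : ¬ ∃ e, σ₁ e = α) :
    ∃ β : R₂, ∀ g : Polynomial E,
      SignType.sign (g.eval₂ σ₁ α) = SignType.sign (g.eval₂ σ₂ β) := by
  classical
  have hlt := lt_iff_of_sign σ₁ σ₂ hs
  have hd : h.natDegree ≠ 0 := by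
    intro hd
    rw [Polynomial.eq_C_of_natDegree_eq_zero hd] at hα h0
    simp only [Polynomial.eval₂_C, map_eq_zero] at hα
    simp [hα] at h0
  haveI : CharZero E := σ₁.charZero_iff σ₁.injective |>.2 inferInstance
  have hdd : h.derivative.natDegree < h.natDegree := Polynomial.natDegree_derivative_lt hd
  have hd0 : h.derivative ≠ 0 := fun hh => hd (Polynomial.derivative_eq_zero.1 hh)
  have hm0 : h.map σ₁ ≠ 0 := (Polynomial.map_ne_zero_iff σ₁.injective).2 h0
  have hm0' : h.map σ₂ ≠ 0 := (Polynomial.map_ne_zero_iff σ₂.injective).2 h0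
  -- bound
  have habs : ∀ c : E, |σ₁ c| ∈ σ₁.fieldRange := by
    intro c
    rcases abs_choice (σ₁ c) with h | h
    · rw [h]; exact ⟨c, rfl⟩
    · rw [h]; exact ⟨-c, map_neg _ _⟩
  obtain ⟨M, hM⟩ : ∃ M, |α| < σ₁ M := by
    have hb := cauchy_bound (h.map σ₁) hm0 α (by rw [Polynomial.eval_map]; exact hα)
    have hin : 1 + (∑ i ∈ Finset.range (h.map σ₁).natDegree, |(h.map σ₁).coeff i|) /
        |(h.map σ₁).leadingCoeff| + 1 ∈ σ₁.fieldRange := by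
      refine add_mem (add_mem (one_mem _) (div_mem (sum_mem fun i _ => ?_) ?_)) (one_mem _)
      · rw [Polynomial.coeff_map]; exact habs _
      · rw [Polynomial.leadingCoeff_map]; exact habs _
    obtain ⟨M, hM⟩ := hin
    exact ⟨M, by rw [hM]; linarith⟩
  rw [abs_lt] at hM
  let Z : Finset E := h.derivative.roots.toFinset ∪ {M, -M}
  obtain ⟨a, ha, hamax⟩ := Finset.exists_max_image (Z.filter fun z => σ₁ z < α) σ₁
    ⟨-M, by simp [Z]; exact hM.1⟩
  obtain ⟨b, hb, hbmin⟩ := Finset.exists_min_image (Z.filter fun z => α < σ₁ z) σ₁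
    ⟨M, by simp [Z]; exact hM.2⟩
  simp only [Finset.mem_filter, and_imp] at ha hb hamax hbmin
  have hgap : ∀ z ∈ Z, σ₁ a < σ₁ z → σ₁ z < σ₁ b → False := by
    intro z hz h3 h4
    rcases lt_trichotomy (σ₁ z) α with h | h | h
    · exact absurd (hamax z hz h) (not_le.2 h3)
    · exact hα' ⟨z, h⟩
    · exact absurd (hbmin z hz h) (not_le.2 h4)
  have hdZ : ∀ z, h.derivative.eval z = 0 → z ∈ Z := by
    intro z hz
    simp only [Z, Finset.mem_union, Multiset.mem_toFinset]
    left
    exact (Polynomial.mem_roots hd0).2 hz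
  have nd₁ : ∀ c, σ₁ a < c → c < σ₁ b → (h.map σ₁).derivative.eval c ≠ 0 := by
    intro c h3 h4 h5
    rw [Polynomial.derivative_map, Polynomial.eval_map] at h5
    obtain ⟨z, rfl⟩ := ih₁ _ hd0 hdd c h5
    rw [Polynomial.eval₂_at_apply, map_eq_zero] at h5
    exact hgap z (hdZ z h5) h3 h4
  have nd₂ : ∀ c, σ₂ a < c → c < σ₂ b → (h.map σ₂).derivative.eval c ≠ 0 := by
    intro c h3 h4 h5
    rw [Polynomial.derivative_map, Polynomial.eval_map] at h5
    obtain ⟨z, rfl⟩ := ih₂ _ hd0 hdd c h5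
    rw [Polynomial.eval₂_at_apply, map_eq_zero] at h5
    exact hgap z (hdZ z h5) ((hlt _ _).2 h3) ((hlt _ _).2 h4)
  have hev : ∀ z, SignType.sign ((h.map σ₁).eval (σ₁ z)) = SignType.sign ((h.map σ₂).eval (σ₂ z)) := by
    intro z
    rw [Polynomial.eval_map, Polynomial.eval_map, Polynomial.eval₂_at_apply,
      Polynomial.eval₂_at_apply, hs]
  have hab : σ₁ a < σ₁ b := ha.2.trans hb.2
  have hab₂ : σ₂ a < σ₂ b := (hlt _ _).1 hab
  obtain ⟨s, hs0, hsx⟩ := h₁.simple_root (h.map σ₁) hm0 ha.2 hb.2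
    (by rw [Polynomial.eval_map]; exact hα) nd₁
  have sa := hsx (σ₁ a) le_rfl hab.le
  have sb := hsx (σ₁ b) hab.le le_rfl
  rw [sign_neg (sub_neg.2 ha.2)] at sa
  rw [sign_pos (sub_pos.2 hb.2), one_mul] at sb
  have hneg : (h.map σ₂).eval (σ₂ a) * (h.map σ₂).eval (σ₂ b) < 0 := by
    rw [← sign_eq_neg_one_iff, sign_mul, ← hev, ← hev, sa, sb]
    revert hs0; clear * -; revert s; decide
  obtain ⟨β, hβ1, hβ2, hβ⟩ := h₂ _ _ _ hab₂ hneg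
  obtain ⟨t, ht0, htx⟩ := h₂.simple_root (h.map σ₂) hm0' hβ1 hβ2 hβ nd₂
  have tb := htx (σ₂ b) hab₂.le le_rfl
  rw [sign_pos (sub_pos.2 hβ2), one_mul, ← hev, sb] at tb
  subst tb
  have hcut : ∀ z, SignType.sign (α - σ₁ z) = SignType.sign (β - σ₂ z) := by
    intro z
    rcases lt_or_ge (σ₁ z) (σ₁ a) with h3 | h3
    · have h4 := (hlt _ _).1 h3
      rw [sign_pos (sub_pos.2 (h3.trans ha.2)), sign_pos (sub_pos.2 (h4.trans hβ1))]
    rcases lt_or_ge (σ₁ b) (σ₁ z) with h4 | h4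
    · have h5 := (hlt _ _).1 h4
      rw [sign_neg (sub_neg.2 (hb.2.trans h4)), sign_neg (sub_neg.2 (hβ2.trans h5))]
    have h3' : σ₂ a ≤ σ₂ z := not_lt.1 (fun hh => not_lt.2 h3 ((hlt _ _).2 hh))
    have h4' : σ₂ z ≤ σ₂ b := not_lt.1 (fun hh => not_lt.2 h4 ((hlt _ _).2 hh))
    have e1 := hsx _ h3 h4
    have e2 := htx _ h3' h4'
    rw [← hev, e1] at e2
    rw [← neg_sub (σ₁ z), ← neg_sub (σ₂ z), Left.sign_neg, Left.sign_neg]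
    congr 1
    generalize SignType.sign (σ₁ z - α) = u at e2 ⊢
    generalize SignType.sign (σ₂ z - β) = v at e2 ⊢
    clear * - e2 hs0
    revert s u v; decide
  refine ⟨β, fun g => ?_⟩
  have hr1 : g.eval₂ σ₁ α = (g % h).eval₂ σ₁ α := by
    conv_lhs => rw [← EuclideanDomain.div_add_mod g h]
    rw [Polynomial.eval₂_add, Polynomial.eval₂_mul, hα, zero_mul, zero_add]
  have hr2 : g.eval₂ σ₂ β = (g % h).eval₂ σ₂ β := by
    rw [Polynomial.eval_map] at hβ
    conv_lhs => rw [← EuclideanDomain.div_add_mod g h]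
    rw [Polynomial.eval₂_add, Polynomial.eval₂_mul, hβ, zero_mul, zero_add]
  rw [hr1, hr2]
  by_cases hg0 : g % h = 0
  · simp [hg0]
  have hgd : (g % h).natDegree < h.natDegree := Polynomial.natDegree_mod_lt g hd
  exact sign_det h₁ h₂ σ₁ σ₂ hs α β _ (g % h) rfl hg0 (ih₁ _ hg0 hgd) (ih₂ _ hg0 hgd)
    (fun z _ => hcut z)

theorem roots_mem (h₁ : HasIVT R₁) (h₂ : HasIVT R₂) (σ₁ : E →+* R₁) (σ₂ : E →+* R₂)
    (hs : ∀ e, SignType.sign (σ₁ e) = SignType.sign (σ₂ e))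
    (hmax : ∀ (α : R₁) (β : R₂), (∀ g : Polynomial E,
      SignType.sign (g.eval₂ σ₁ α) = SignType.sign (g.eval₂ σ₂ β)) →
      (∃ e, σ₁ e = α) ∧ (∃ e, σ₂ e = β)) :
    ∀ (d : ℕ) (h : Polynomial E), h ≠ 0 → h.natDegree = d →
      (∀ x, h.eval₂ σ₁ x = 0 → ∃ e, σ₁ e = x) ∧ (∀ x, h.eval₂ σ₂ x = 0 → ∃ e, σ₂ e = x) := by
  intro d
  induction d using Nat.strong_induction_on with
  | _ d ih =>
  intro h h0 hd
  constructor
  · intro x hx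
    by_contra hcon
    obtain ⟨β, hβ⟩ := root_step h₁ h₂ σ₁ σ₂ hs h h0
      (fun g hg0 hg => (ih _ (hd ▸ hg) g hg0 rfl).1) (fun g hg0 hg => (ih _ (hd ▸ hg) g hg0 rfl).2)
      x hx hcon
    exact hcon (hmax x β hβ).1
  · intro x hx
    by_contra hcon
    obtain ⟨β, hβ⟩ := root_step h₂ h₁ σ₂ σ₁ (fun e => (hs e).symm) h h0
      (fun g hg0 hg => (ih _ (hd ▸ hg) g hg0 rfl).2) (fun g hg0 hg => (ih _ (hd ▸ hg) g hg0 rfl).1)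
      x hx hcon
    exact hcon (hmax β x (fun g => (hβ g).symm)).2

theorem transfer_field (h₁ : HasIVT R₁) (h₂ : HasIVT R₂) (σ₁ : E →+* R₁) (σ₂ : E →+* R₂)
    (hs : ∀ e, SignType.sign (σ₁ e) = SignType.sign (σ₂ e))
    (hmax : ∀ (α : R₁) (β : R₂), (∀ g : Polynomial E,
      SignType.sign (g.eval₂ σ₁ α) = SignType.sign (g.eval₂ σ₂ β)) →
      (∃ e, σ₁ e = α) ∧ (∃ e, σ₂ e = β)) (G : Finset (Polynomial E)) (α : R₁) :
    ∃ β : R₂, ∀ g ∈ G, SignType.sign (g.eval₂ σ₁ α) = SignType.sign (g.eval₂ σ₂ β) := by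
  classical
  by_cases hα : ∃ e, σ₁ e = α
  · obtain ⟨e, rfl⟩ := hα
    refine ⟨σ₂ e, fun g _ => ?_⟩
    rw [Polynomial.eval₂_at_apply, Polynomial.eval₂_at_apply, hs]
  letI : LinearOrder E := LinearOrder.lift' σ₁ σ₁.injective
  have hltE : ∀ x y : E, x < y ↔ σ₁ x < σ₁ y := fun _ _ => Iff.rfl
  have hleE : ∀ x y : E, x ≤ y ↔ σ₁ x ≤ σ₁ y := fun _ _ => Iff.rfl
  haveI : IsStrictOrderedRing E := Function.Injective.isStrictOrderedRing σ₁ (map_zero _) (map_one _)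
    (map_add _) (map_mul _) (fun {_ _} => Iff.rfl) (fun {_ _} => Iff.rfl)
  let Z : Finset E := G.biUnion (fun g => g.roots.toFinset)
  obtain ⟨e, he1, he2⟩ := Order.exists_between_finsets (Z.filter fun z => σ₁ z < α)
    (Z.filter fun z => α < σ₁ z) (by
      intro x hx y hy
      simp only [Finset.mem_filter] at hx hy
      rw [hltE]
      exact hx.2.trans hy.2)
  simp only [Finset.mem_filter, and_imp] at he1 he2
  refine ⟨σ₂ e, fun g hg => ?_⟩
  by_cases hg0 : g = 0
  · simp [hg0]
  have hroots := roots_mem h₁ h₂ σ₁ σ₂ hs hmax _ g hg0 rfl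
  refine sign_det h₁ h₂ σ₁ σ₂ hs α (σ₂ e) _ g rfl hg0 hroots.1 hroots.2 (fun z hz => ?_)
  have hzZ : z ∈ Z := Finset.mem_biUnion.2 ⟨g, hg, by
    rw [Multiset.mem_toFinset]; exact (Polynomial.mem_roots hg0).2 hz⟩
  rw [← map_sub σ₂, ← hs, map_sub σ₁]
  rcases lt_trichotomy (σ₁ z) α with h | h | h
  · have := (hltE _ _).1 (he1 z hzZ h)
    rw [sign_pos (sub_pos.2 h), sign_pos (sub_pos.2 this)]
  · exact absurd ⟨z, h⟩ hα
  · have := (hltE _ _).1 (he2 z hzZ h)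
    rw [sign_neg (sub_neg.2 h), sign_neg (sub_neg.2 this)]

theorem transfer_ring {B : Type*} [CommRing B] (h₁ : HasIVT R₁) (h₂ : HasIVT R₂)
    (φ₁ : B →+* R₁) (φ₂ : B →+* R₂)
    (hs : ∀ e, SignType.sign (φ₁ e) = SignType.sign (φ₂ e))
    (G : Finset (Polynomial B)) (α : R₁) :
    ∃ β : R₂, ∀ g ∈ G, SignType.sign (g.eval₂ φ₁ α) = SignType.sign (g.eval₂ φ₂ β) := by
  classical
  obtain ⟨Γ, hΓ0, hΓ⟩ := zorn_le_nonempty₀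
    {Γ : Subring (R₁ × R₂) | ∀ z ∈ Γ, SignType.sign z.1 = SignType.sign z.2} (by
      intro c hc hch y hy
      refine ⟨sSup c, ?_, fun z hz => le_sSup hz⟩
      intro z hz
      rw [Subring.mem_sSup_of_directedOn ⟨y, hy⟩ hch.directedOn] at hz
      obtain ⟨s, hs, hz⟩ := hz
      exact hc hs z hz) (φ₁.prod φ₂).range (by
      rintro _ ⟨b, rfl⟩
      exact hs b)
  have hsΓ : ∀ z ∈ Γ, SignType.sign z.1 = SignType.sign z.2 := hΓ.prop
  have h12 : ∀ z ∈ Γ, z.1 = 0 → z = 0 := by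
    intro z hz h
    have := hsΓ z hz
    rw [h, sign_zero] at this
    exact Prod.ext h (sign_eq_zero_iff.1 this.symm)
  have h12' : ∀ z ∈ Γ, z.1 ≠ 0 → z.2 ≠ 0 := by
    intro z hz h h'
    have := hsΓ z hz
    rw [h', sign_zero] at this
    exact h (sign_eq_zero_iff.1 this)
  -- closed under inverses
  have hinv : ∀ x ∈ Γ, x.1 ≠ 0 → (x.1⁻¹, x.2⁻¹) ∈ Γ := by
    intro x hx hx0
    let Γ' : Subring (R₁ × R₂) :=
      { carrier := {z | ∃ u ∈ Γ, ∃ v ∈ Γ, v.1 ≠ 0 ∧ z * v = u}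
        mul_mem' := by
          rintro z z' ⟨u, hu, v, hv, hv0, e⟩ ⟨u', hu', v', hv', hv0', e'⟩
          exact ⟨u * u', mul_mem hu hu', v * v', mul_mem hv hv', mul_ne_zero hv0 hv0', by
            rw [← e, ← e']; ring⟩
        one_mem' := ⟨1, one_mem _, 1, one_mem _, by simp, by simp⟩
        add_mem' := by
          rintro z z' ⟨u, hu, v, hv, hv0, e⟩ ⟨u', hu', v', hv', hv0', e'⟩
          exact ⟨u * v' + u' * v, add_mem (mul_mem hu hv') (mul_mem hu' hv), v * v',
            mul_mem hv hv', mul_ne_zero hv0 hv0', by rw [← e, ← e']; ring⟩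
        zero_mem' := ⟨0, zero_mem _, 1, one_mem _, by simp, by simp⟩
        neg_mem' := by
          rintro z ⟨u, hu, v, hv, hv0, e⟩
          exact ⟨-u, neg_mem hu, v, hv, hv0, by rw [← e]; ring⟩ }
    have hle : Γ' ≤ Γ := hΓ.le_of_ge (y := Γ') (by
      rintro z ⟨u, hu, v, hv, hv0, e⟩
      have e1 := hsΓ u hu
      have e2 := hsΓ v hv
      rw [← e, Prod.fst_mul, Prod.snd_mul, sign_mul, sign_mul, e2] at e1
      have : SignType.sign v.2 ≠ 0 := by rw [Ne, sign_eq_zero_iff]; exact h12' v hv hv0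
      generalize SignType.sign v.2 = t at *
      generalize SignType.sign z.1 = p at *
      generalize SignType.sign z.2 = q at *
      clear * - e1 this
      revert t p q; decide) (fun z hz => ⟨z, hz, 1, one_mem _, by simp, by simp⟩)
    exact hle ⟨1, one_mem _, x, hx, hx0, Prod.ext (by simp [hx0]) (by simp [h12' x hx hx0])⟩
  have hfield : IsField Γ :=
    { exists_pair_ne := ⟨0, 1, zero_ne_one⟩
      mul_comm := mul_comm
      mul_inv_cancel := by
        intro x hx
        have hx0 : x.1.1 ≠ 0 := fun h => hx (Subtype.ext (h12 _ x.2 h))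
        refine ⟨⟨_, hinv _ x.2 hx0⟩, Subtype.ext (Prod.ext ?_ ?_)⟩
        · simp [hx0]
        · simp [h12' _ x.2 hx0] }
  letI : Field Γ := hfield.toField
  let σ₁ : Γ →+* R₁ := (RingHom.fst R₁ R₂).comp Γ.subtype
  let σ₂ : Γ →+* R₂ := (RingHom.snd R₁ R₂).comp Γ.subtype
  have hσ : ∀ e, SignType.sign (σ₁ e) = SignType.sign (σ₂ e) := fun e => hsΓ _ e.2
  have hmax : ∀ (α : R₁) (β : R₂), (∀ g : Polynomial Γ,
      SignType.sign (g.eval₂ σ₁ α) = SignType.sign (g.eval₂ σ₂ β)) →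
      (∃ e, σ₁ e = α) ∧ (∃ e, σ₂ e = β) := by
    intro α β hαβ
    have hle : ((Polynomial.eval₂RingHom σ₁ α).prod (Polynomial.eval₂RingHom σ₂ β)).range ≤ Γ :=
      hΓ.le_of_ge (by
        rintro _ ⟨g, rfl⟩
        exact hαβ g) (by
        intro z hz
        exact ⟨Polynomial.C ⟨z, hz⟩, by simp [σ₁, σ₂]⟩)
    have hm : (α, β) ∈ Γ := hle ⟨Polynomial.X, by simp⟩
    exact ⟨⟨⟨_, hm⟩, rfl⟩, ⟨⟨_, hm⟩, rfl⟩⟩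
  let ι : B →+* Γ := (φ₁.prod φ₂).codRestrict Γ (fun b => hΓ0 ⟨b, rfl⟩)
  obtain ⟨β, hβ⟩ := transfer_field h₁ h₂ σ₁ σ₂ hσ hmax (G.image (Polynomial.map ι)) α
  refine ⟨β, fun g hg => ?_⟩
  have := hβ _ (Finset.mem_image_of_mem _ hg)
  rw [Polynomial.eval₂_map, Polynomial.eval₂_map] at this
  exact this

end transfer

theorem real_hasIVT_aux (p : Polynomial ℝ) (a b : ℝ) (hab : a < b)
    (h : p.eval a * p.eval b < 0) : ∃ c, a < c ∧ c < b ∧ p.eval c = 0 := by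
  have hc : ContinuousOn (fun x => p.eval x) (Set.Icc a b) := p.continuous.continuousOn
  rcases mul_neg_iff.1 h with ⟨h1, h2⟩ | ⟨h1, h2⟩
  · obtain ⟨c, hc1, hc2⟩ := intermediate_value_Ioo' hab.le hc ⟨h2, h1⟩
    exact ⟨c, hc1.1, hc1.2, hc2⟩
  · obtain ⟨c, hc1, hc2⟩ := intermediate_value_Ioo hab.le hc ⟨h1, h2⟩
    exact ⟨c, hc1.1, hc1.2, hc2⟩

theorem germ_hasIVT {I : Type*} (U : Ultrafilter I) : HasIVT ((U : Filter I).Germ ℝ) := by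
  intro p a b hab h
  let κ : (I → ℝ) →+* (U : Filter I).Germ ℝ := Filter.Germ.coeRingHom (U : Filter I)
  have hκ : Function.Surjective κ := by
    intro x
    induction x using Filter.Germ.inductionOn with
    | h f => exact ⟨f, rfl⟩
  obtain ⟨q, rfl⟩ := Polynomial.map_surjective κ hκ p
  obtain ⟨a, rfl⟩ := hκ a
  obtain ⟨b, rfl⟩ := hκ b
  have he : ∀ c : I → ℝ, (q.map κ).eval (κ c) = κ (q.eval c) := fun c =>
    Polynomial.eval_map_apply _ _
  have hp : ∀ (c : I → ℝ) i, q.eval c i = (q.map (Pi.evalRingHom (fun _ => ℝ) i)).eval (c i) :=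
    fun c i => (Polynomial.eval_map_apply (f := Pi.evalRingHom (fun _ => ℝ) i) c).symm
  rw [he, he, ← map_mul] at h
  have hab' : ∀ᶠ i in (U : Filter I), a i < b i := Filter.Germ.coe_lt.1 hab
  have h' : ∀ᶠ i in (U : Filter I), (q.eval a * q.eval b) i < 0 := Filter.Germ.coe_lt.1 h
  have hex : ∀ᶠ i in (U : Filter I), ∃ c, a i < c ∧ c < b i ∧
      (q.map (Pi.evalRingHom (fun _ => ℝ) i)).eval c = 0 := by
    filter_upwards [hab', h'] with i h1 h2
    apply real_hasIVT_aux _ _ _ h1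
    rw [← hp, ← hp]; exact h2
  obtain ⟨c, hc⟩ := hex.choice
  refine ⟨κ c, Filter.Germ.coe_lt.2 (hc.mono fun i h => h.1),
    Filter.Germ.coe_lt.2 (hc.mono fun i h => h.2.1), ?_⟩
  rw [he]
  refine Filter.Germ.coe_eq.2 (hc.mono fun i h => ?_)
  have := h.2.2
  rw [← hp] at this
  exact this

theorem germ_sign {I : Type*} (U : Ultrafilter I) (f : I → ℝ) (s : SignType) :
    SignType.sign ((f : (U : Filter I).Germ ℝ)) = s ↔
      ∀ᶠ i in (U : Filter I), SignType.sign (f i) = s := by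
  have key : ∀ᶠ i in (U : Filter I),
      SignType.sign (f i) = SignType.sign ((f : (U : Filter I).Germ ℝ)) := by
    rcases lt_trichotomy ((f : (U : Filter I).Germ ℝ)) 0 with h | h | h
    · rw [sign_neg h]
      exact (Filter.Germ.coe_lt.1 h).mono fun i hi => sign_neg hi
    · rw [h, sign_zero]
      exact (Filter.Germ.coe_eq.1 h).mono fun i hi => by
        rw [hi]; exact sign_zero
    · rw [sign_pos h]
      exact (Filter.Germ.coe_lt.1 h).mono fun i hi => sign_pos hi
  constructor
  · rintro rfl; exact key
  · intro h
    obtain ⟨i, h1, h2⟩ := (key.and h).exists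
    rw [← h1, h2]

theorem sign_of_real {R : Type*} [Field R] [LinearOrder R] [IsStrictOrderedRing R]
    (φ : ℝ →+* R) (r : ℝ) : SignType.sign (φ r) = SignType.sign r := by
  have hpos : ∀ r : ℝ, 0 < r → 0 < φ r := by
    intro r hr
    rw [← Real.mul_self_sqrt hr.le, map_mul]
    have : φ (Real.sqrt r) ≠ 0 := by
      rw [map_ne_zero]; exact (Real.sqrt_pos.2 hr).ne'
    exact mul_self_pos.2 this
  rcases lt_trichotomy r 0 with h | h | h
  · rw [sign_neg h, sign_neg]
    have := hpos (-r) (by linarith)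
    rw [map_neg] at this; linarith
  · simp [h]
  · rw [sign_pos h, sign_pos (hpos r h)]

theorem transfer_real {R : Type*} [Field R] [LinearOrder R] [IsStrictOrderedRing R]
    (hR : HasIVT R) (φ : ℝ →+* R) (n : ℕ) : ∀ (ξ : Fin n → R)
    (G : Finset (MvPolynomial (Fin n) ℝ)), ∃ x : Fin n → ℝ, ∀ g ∈ G,
      SignType.sign (eval₂ φ ξ g) = SignType.sign (eval x g) := by
  classical
  induction n with
  | zero =>
    intro ξ G
    refine ⟨Fin.elim0, fun g _ => ?_⟩
    rw [eq_C_of_isEmpty g, eval₂_C, eval_C, sign_of_real]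
  | succ n ih =>
    intro ξ G
    choose x hx using ih (Fin.tail ξ)
    let I := Finset (MvPolynomial (Fin n) ℝ)
    let U : Ultrafilter I := Ultrafilter.of Filter.atTop
    have hU : (U : Filter I) ≤ Filter.atTop := Ultrafilter.of_le _
    let φ₁ : MvPolynomial (Fin n) ℝ →+* R := eval₂Hom φ (Fin.tail ξ)
    let φ₂ : MvPolynomial (Fin n) ℝ →+* (U : Filter I).Germ ℝ :=
      (Filter.Germ.coeRingHom (U : Filter I)).comp (RingHom.pi fun i => eval (x i))
    have hφ₂ : ∀ p, φ₂ p = ((fun i => eval (x i) p : I → ℝ) : (U : Filter I).Germ ℝ) :=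
      fun p => rfl
    have hs : ∀ p, SignType.sign (φ₁ p) = SignType.sign (φ₂ p) := by
      intro p
      rw [hφ₂, eq_comm, germ_sign]
      have : ∀ᶠ i : I in (U : Filter I), ({p} : I) ≤ i :=
        hU (Filter.eventually_ge_atTop ({p} : I))
      filter_upwards [this] with i hi
      exact (hx i p (Finset.singleton_subset_iff.1 hi)).symm
    obtain ⟨β, hβ⟩ := transfer_ring hR (germ_hasIVT U) φ₁ φ₂ hs
      (G.image (finSuccEquiv ℝ n)) (ξ 0)
    induction β using Filter.Germ.inductionOn with
    | h y =>
    have hall : ∀ᶠ i in (U : Filter I), ∀ g ∈ G,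
        SignType.sign (eval (Fin.cons (y i) (x i) : Fin (n+1) → ℝ) g) =
          SignType.sign (eval₂ φ ξ g) := by
      rw [Filter.eventually_all_finset]
      intro g hg
      have h1 := hβ _ (Finset.mem_image_of_mem _ hg)
      have e1 : (finSuccEquiv ℝ n g).eval₂ φ₁ (ξ 0) = eval₂ φ ξ g := by
        have : ((Polynomial.eval₂RingHom φ₁ (ξ 0)).comp
            (finSuccEquiv ℝ n : MvPolynomial (Fin (n+1)) ℝ →+* _)) = eval₂Hom φ ξ := by
          apply MvPolynomial.ringHom_ext
          · intro r
            simp [φ₁, finSuccEquiv_apply]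
          · intro i
            refine Fin.cases ?_ (fun j => ?_) i
            · simp only [RingHom.comp_apply, RingHom.coe_coe, finSuccEquiv_X_zero,
                Polynomial.coe_eval₂RingHom, Polynomial.eval₂_X, coe_eval₂Hom, eval₂_X]
            · simp only [RingHom.comp_apply, RingHom.coe_coe, finSuccEquiv_X_succ,
                Polynomial.coe_eval₂RingHom, Polynomial.eval₂_C, coe_eval₂Hom, eval₂_X, φ₁]
              rfl
        exact congrArg (fun f => f g) this
      have e2 : (finSuccEquiv ℝ n g).eval₂ φ₂ (y : (U : Filter I).Germ ℝ) =
          ((fun i => eval (Fin.cons (y i) (x i) : Fin (n+1) → ℝ) g : I → ℝ) :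
            (U : Filter I).Germ ℝ) := by
        have : ((Polynomial.eval₂RingHom φ₂ (y : (U : Filter I).Germ ℝ)).comp
            (finSuccEquiv ℝ n : MvPolynomial (Fin (n+1)) ℝ →+* _)) =
            (Filter.Germ.coeRingHom (U : Filter I)).comp
              (RingHom.pi fun i => eval (Fin.cons (y i) (x i) : Fin (n+1) → ℝ)) := by
          apply MvPolynomial.ringHom_ext
          · intro r
            simp only [RingHom.comp_apply, RingHom.coe_coe, finSuccEquiv_apply, eval₂Hom_C,
              Polynomial.coe_eval₂RingHom, Polynomial.eval₂_C, φ₂]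
            refine Filter.Germ.coe_eq.2 (Filter.Eventually.of_forall fun i => ?_)
            change eval _ (C r) = eval _ (C r)
            rw [eval_C, eval_C]
          · intro i
            refine Fin.cases ?_ (fun j => ?_) i
            · simp only [RingHom.comp_apply, RingHom.coe_coe, finSuccEquiv_X_zero,
                Polynomial.coe_eval₂RingHom, Polynomial.eval₂_X]
              refine Filter.Germ.coe_eq.2 (Filter.Eventually.of_forall fun i => ?_)
              change y i = eval _ (X 0)
              rw [eval_X]; rfl
            · simp only [RingHom.comp_apply, RingHom.coe_coe, finSuccEquiv_X_succ,
                Polynomial.coe_eval₂RingHom, Polynomial.eval₂_C, φ₂]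
              refine Filter.Germ.coe_eq.2 (Filter.Eventually.of_forall fun i => ?_)
              change eval _ (X j) = eval _ (X j.succ)
              rw [eval_X, eval_X]; rfl
        exact congrArg (fun f => f g) this
      rw [e1, e2, eq_comm, germ_sign] at h1
      exact h1
    obtain ⟨i, hi⟩ := hall.exists
    exact ⟨_, fun g hg => (hi g hg).symm⟩

theorem qm_const {n : ℕ} {M : Set (MvPolynomial (Fin n) ℝ)} (hM : IsQuadraticModule M)
    {r : ℝ} (hr : 0 ≤ r) : C r ∈ M := by
  have := hM.2.2 (C (Real.sqrt r)) 1 hM.1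
  rwa [← C_pow, Real.sq_sqrt hr, mul_one] at this

theorem qm_smul {n : ℕ} {M : Set (MvPolynomial (Fin n) ℝ)} (hM : IsQuadraticModule M)
    {r : ℝ} (hr : 0 ≤ r) {p : MvPolynomial (Fin n) ℝ} (hp : p ∈ M) : C r * p ∈ M := by
  have := hM.2.2 (C (Real.sqrt r)) p hp
  rwa [← C_pow, Real.sq_sqrt hr] at this

theorem qm_sq {n : ℕ} {M : Set (MvPolynomial (Fin n) ℝ)} (hM : IsQuadraticModule M)
    (p : MvPolynomial (Fin n) ℝ) : p ^ 2 ∈ M := by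
  have := hM.2.2 p 1 hM.1
  rwa [mul_one] at this

theorem qm_sum_sq {n : ℕ} {M : Set (MvPolynomial (Fin n) ℝ)} (hM : IsQuadraticModule M)
    (s : Finset (Fin n)) : ∑ i ∈ s, (X i : MvPolynomial (Fin n) ℝ) ^ 2 ∈ M := by
  classical
  induction s using Finset.induction_on with
  | empty => simpa using qm_const hM (le_refl (0 : ℝ))
  | insert a s ha ih =>
    rw [Finset.sum_insert ha]
    exact hM.2.1 _ (qm_sq hM _) _ ih

/-- bounded elements -/
def QBdd {n : ℕ} (M : Set (MvPolynomial (Fin n) ℝ)) (p : MvPolynomial (Fin n) ℝ) : Prop :=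
  ∃ N : ℝ, 0 < N ∧ C N - p ∈ M ∧ C N + p ∈ M

theorem QBdd.add {n : ℕ} {M : Set (MvPolynomial (Fin n) ℝ)} (hM : IsQuadraticModule M)
    {p q : MvPolynomial (Fin n) ℝ} (hp : QBdd M p) (hq : QBdd M q) : QBdd M (p + q) := by
  obtain ⟨N, hN, h1, h2⟩ := hp
  obtain ⟨K, hK, h3, h4⟩ := hq
  refine ⟨N + K, by positivity, ?_, ?_⟩
  · have := hM.2.1 _ h1 _ h3
    rw [C_add]; convert this using 1; ring
  · have := hM.2.1 _ h2 _ h4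
    rw [C_add]; convert this using 1; ring

theorem QBdd.neg {n : ℕ} {M : Set (MvPolynomial (Fin n) ℝ)}
    {p : MvPolynomial (Fin n) ℝ} (hp : QBdd M p) : QBdd M (-p) := by
  obtain ⟨N, hN, h1, h2⟩ := hp
  exact ⟨N, hN, by simpa using h2, by simpa [← sub_eq_add_neg] using h1⟩

theorem QBdd.smul {n : ℕ} {M : Set (MvPolynomial (Fin n) ℝ)} (hM : IsQuadraticModule M)
    {p : MvPolynomial (Fin n) ℝ} (hp : QBdd M p) {r : ℝ} (hr : 0 < r) : QBdd M (C r * p) := by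
  obtain ⟨N, hN, h1, h2⟩ := hp
  refine ⟨r * N, by positivity, ?_, ?_⟩
  · have := qm_smul hM hr.le h1
    rw [C_mul]; convert this using 1; ring
  · have := qm_smul hM hr.le h2
    rw [C_mul]; convert this using 1; ring

theorem QBdd.sq {n : ℕ} {M : Set (MvPolynomial (Fin n) ℝ)} (hM : IsQuadraticModule M)
    {p : MvPolynomial (Fin n) ℝ} (hp : QBdd M p) : QBdd M (p ^ 2) := by
  obtain ⟨N, hN, h1, h2⟩ := hp
  refine ⟨N ^ 2, by positivity, ?_, ?_⟩
  · have := qm_smul hM (r := 1 / (2 * N)) (by positivity)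
      (hM.2.1 _ (hM.2.2 (C N - p) _ h2) _ (hM.2.2 (C N + p) _ h1))
    convert this using 1
    have e : (C N - p) ^ 2 * (C N + p) + (C N + p) ^ 2 * (C N - p)
        = C (2 * N) * (C (N ^ 2) - p ^ 2) := by
      rw [C_mul, C_pow, show (C 2 : MvPolynomial (Fin n) ℝ) = 2 from map_ofNat C 2]; ring
    rw [e, ← mul_assoc, ← C_mul, one_div_mul_cancel (by positivity), C_1, one_mul]
  · exact hM.2.1 _ (qm_const hM (by positivity)) _ (qm_sq hM p)

theorem QBdd.mul {n : ℕ} {M : Set (MvPolynomial (Fin n) ℝ)} (hM : IsQuadraticModule M)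
    {p q : MvPolynomial (Fin n) ℝ} (hp : QBdd M p) (hq : QBdd M q) : QBdd M (p * q) := by
  have h := QBdd.smul hM (QBdd.add hM (QBdd.sq hM (QBdd.add hM hp hq))
    (QBdd.neg (QBdd.sq hM (QBdd.add hM hp (QBdd.neg hq))))) (r := 1 / 4) (by norm_num)
  convert h using 1
  have e : (p + q) ^ 2 + -(p + -q) ^ 2 = C 4 * (p * q) := by
    rw [show (C 4 : MvPolynomial (Fin n) ℝ) = 4 from map_ofNat C 4]; ring
  rw [e, ← mul_assoc, ← C_mul]; norm_num

theorem arch_of_ball {n : ℕ} {M : Set (MvPolynomial (Fin n) ℝ)} (hM : IsQuadraticModule M)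
    {N : ℝ} (hN : 0 ≤ N) (h : C N - ∑ i, (X i : MvPolynomial (Fin n) ℝ) ^ 2 ∈ M)
    (p : MvPolynomial (Fin n) ℝ) : QBdd M p := by
  classical
  have hC : ∀ r : ℝ, QBdd M (C r) := by
    intro r
    refine ⟨|r| + 1, by positivity, ?_, ?_⟩
    · rw [← C_sub]; exact qm_const hM (by linarith [le_abs_self r])
    · rw [← C_add]; exact qm_const hM (by linarith [neg_abs_le r])
  have hX : ∀ i, QBdd M (X i : MvPolynomial (Fin n) ℝ) := by
    intro i
    have h1 : C N - (X i : MvPolynomial (Fin n) ℝ) ^ 2 ∈ M := by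
      have := hM.2.1 _ h _ (qm_sum_sq hM (Finset.univ.erase i))
      rw [← Finset.add_sum_erase _ _ (Finset.mem_univ i)] at this
      convert this using 1; ring
    have e : (C (1/4) : MvPolynomial (Fin n) ℝ) = C (1/2) ^ 2 := by
      rw [← C_pow]; norm_num
    have e2 : (C (1/2) : MvPolynomial (Fin n) ℝ) * 2 = 1 := by
      rw [← show (C 2 : MvPolynomial (Fin n) ℝ) = 2 from map_ofNat C 2, ← C_mul, ← C_1]; norm_num
    refine ⟨N + 1 / 4, by positivity, ?_, ?_⟩
    · have := hM.2.1 _ h1 _ (qm_sq hM (X i - C (1/2)))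
      convert this using 1
      rw [C_add, e]
      linear_combination (X i) * e2
    · have := hM.2.1 _ h1 _ (qm_sq hM (X i + C (1/2)))
      convert this using 1
      rw [C_add, e]
      linear_combination -(X i) * e2
  induction p using MvPolynomial.induction_on with
  | C r => exact hC r
  | add p q hp hq => exact QBdd.add hM hp hq
  | mul_X p i hp => exact QBdd.mul hM hp (hX i)

theorem arch_of_bdd {n : ℕ} {M : Set (MvPolynomial (Fin n) ℝ)} (hM : IsQuadraticModule M)
    (h : ∀ p, QBdd M p) : IsArchimedeanQM M := by
  intro p
  obtain ⟨N, hN, h1, -⟩ := h p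
  obtain ⟨k, hk⟩ := exists_nat_ge N
  refine ⟨k, ?_⟩
  have := hM.2.1 _ h1 _ (qm_const hM (sub_nonneg.2 hk))
  convert this using 1
  rw [C_sub, map_natCast]; ring

/-- the preordering generated by a tuple -/
def preord {n m : ℕ} (g : Fin m → MvPolynomial (Fin n) ℝ) :
    AddSubmonoid (MvPolynomial (Fin n) ℝ) :=
  AddSubmonoid.closure {f | ∃ (h : MvPolynomial (Fin n) ℝ) (I : Finset (Fin m)),
    f = h ^ 2 * ∏ i ∈ I, g i}

theorem preord_isPre {n m : ℕ} (g : Fin m → MvPolynomial (Fin n) ℝ) :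
    IsPre (preord g : Set (MvPolynomial (Fin n) ℝ)) where
  sq x := AddSubmonoid.subset_closure ⟨x, ∅, by simp⟩
  add x hx y hy := add_mem hx hy
  mul x hx y hy := by
    classical
    have hg : ∀ (I J : Finset (Fin m)), (∏ i ∈ I, g i) * ∏ i ∈ J, g i =
        (∏ i ∈ I ∩ J, g i) ^ 2 * ∏ i ∈ symmDiff I J, g i := by
      intro I J
      have h1 : (∏ i ∈ I \ J, g i) * ∏ i ∈ I ∩ J, g i = ∏ i ∈ I, g i := by
        rw [mul_comm, Finset.prod_inter_mul_prod_sdiff]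
      have h2 : (∏ i ∈ J \ I, g i) * ∏ i ∈ I ∩ J, g i = ∏ i ∈ J, g i := by
        rw [Finset.inter_comm, mul_comm, Finset.prod_inter_mul_prod_sdiff]
      have h3 : ∏ i ∈ symmDiff I J, g i = (∏ i ∈ I \ J, g i) * ∏ i ∈ J \ I, g i := by
        rw [symmDiff_def, Finset.sup_eq_union, Finset.prod_union disjoint_sdiff_sdiff]
      rw [← h1, ← h2, h3]; ring
    refine AddSubmonoid.closure_induction₂ (motive := fun a b _ _ => a * b ∈ preord g)
      ?_ ?_ ?_ ?_ ?_ hx hy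
    · rintro _ _ ⟨h, I, rfl⟩ ⟨k, J, rfl⟩
      refine AddSubmonoid.subset_closure ⟨h * k * ∏ i ∈ I ∩ J, g i, symmDiff I J, ?_⟩
      rw [mul_mul_mul_comm, hg]; ring
    · intro a _; rw [zero_mul]; exact zero_mem _
    · intro a _; rw [mul_zero]; exact zero_mem _
    · intro a b c _ _ _ h1 h2; rw [add_mul]; exact add_mem h1 h2
    · intro a b c _ _ _ h1 h2; rw [mul_add]; exact add_mem h1 h2

theorem preord_sub {n m : ℕ} (g : Fin m → MvPolynomial (Fin n) ℝ)
    {M : Set (MvPolynomial (Fin n) ℝ)} (hM : IsQuadraticModule M)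
    (h : ∀ I : Finset (Fin m), (∏ i ∈ I, g i) ∈ M) : ∀ x ∈ preord g, x ∈ M := by
  intro x hx
  refine AddSubmonoid.closure_induction (motive := fun a _ => a ∈ M) ?_ ?_ ?_ hx
  · rintro _ ⟨k, I, rfl⟩
    exact hM.2.2 _ _ (h I)
  · simpa using qm_const hM (le_refl (0 : ℝ))
  · intro a b _ _ h1 h2; exact hM.2.1 _ h1 _ h2

theorem IsPre.isQM {n : ℕ} {T : Set (MvPolynomial (Fin n) ℝ)} (hT : IsPre T) :
    IsQuadraticModule T :=
  ⟨hT.one, hT.add, fun p _ hq => hT.mul _ (hT.sq p) _ hq⟩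

/-- Krivine and Stengle: certificate for strict positivity -/
theorem positivstellensatz {n m : ℕ} (g : Fin m → MvPolynomial (Fin n) ℝ)
    (f : MvPolynomial (Fin n) ℝ) (hf : ∀ x ∈ SolSet g, 0 < eval x f) :
    ∃ s ∈ preord g, ∃ t ∈ preord g, f * t = 1 + s := by
  classical
  have hT := preord_isPre g
  by_contra hcon
  have h1 : (-1 : MvPolynomial (Fin n) ℝ) ∉
      {z | ∃ s ∈ (preord g : Set (MvPolynomial (Fin n) ℝ)), ∃ t ∈
        (preord g : Set (MvPolynomial (Fin n) ℝ)), z = s + (-f) * t} := by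
    rintro ⟨s, hs, t, ht, h⟩
    exact hcon ⟨s, hs, t, ht, by linear_combination h⟩
  obtain ⟨P, hTP, hP⟩ := exists_ordering _ (hT.adjoin (-f)) h1
  obtain ⟨R, _, _, _, hR, φ, hφ⟩ := exists_rcf_of_ord P hP
  obtain ⟨x, hx⟩ := transfer_real hR (φ.comp C) n (fun i => φ (X i))
    (insert f (Finset.univ.image g))
  have he : ∀ p, eval₂ (φ.comp C) (fun i => φ (X i)) p = φ p := by
    intro p
    have : eval₂Hom (φ.comp C) (fun i => φ (X i)) = φ := by
      apply MvPolynomial.ringHom_ext <;> simp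
    exact congrArg (fun f => f p) this
  simp only [he] at hx
  have hg : x ∈ SolSet g := by
    intro i
    have hi : φ (g i) ≥ 0 := by
      apply hφ
      apply hTP
      refine ⟨g i, AddSubmonoid.subset_closure ⟨1, {i}, by simp⟩, 0, zero_mem _, by ring⟩
    have h2 := hx (g i) (by simp)
    by_contra h3
    push Not at h3
    rw [sign_neg h3, sign_eq_neg_one_iff] at h2
    exact absurd h2 (not_lt.2 hi)
  have h2 := hx f (by simp)
  rw [sign_pos (hf x hg), sign_eq_one_iff] at h2
  have h3 : 0 ≤ φ (-f) := by
    apply hφ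
    apply hTP
    exact ⟨0, zero_mem _, 1, hT.one, by ring⟩
  rw [map_neg] at h3
  linarith

/-- the trick of Wörmann -/
theorem a_to_c {n m : ℕ} (g : Fin m → MvPolynomial (Fin n) ℝ) (hc : IsCompact (SolSet g))
    {M : Set (MvPolynomial (Fin n) ℝ)} (hM : IsQuadraticModule M)
    (h : ∀ I : Finset (Fin m), (∏ i ∈ I, g i) ∈ M) : IsArchimedeanQM M := by
  have hT := preord_isPre g
  have hTq := hT.isQM
  obtain ⟨N, hN0, hN⟩ : ∃ N : ℝ, 0 ≤ N ∧ ∀ x ∈ SolSet g,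
      0 < eval x (C N - ∑ i, (X i : MvPolynomial (Fin n) ℝ) ^ 2) := by
    have hcont : Continuous (fun x : Fin n → ℝ => eval x
      (∑ i, (X i : MvPolynomial (Fin n) ℝ) ^ 2)) := MvPolynomial.continuous_eval _
    obtain ⟨B, hB⟩ := hc.bddAbove_image hcont.continuousOn
    refine ⟨|B| + 1, by positivity, fun x hx => ?_⟩
    have := hB (Set.mem_image_of_mem _ hx)
    rw [map_sub, eval_C]
    have := le_abs_self B
    linarith
  set σ := ∑ i, (X i : MvPolynomial (Fin n) ℝ) ^ 2 with hσ
  have hσT : σ ∈ preord g := qm_sum_sq hTq _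
  set f := C N - σ with hf
  obtain ⟨s, hs, t, ht, hst⟩ := positivstellensatz g f hN
  have h1 : (1 + s) * f ∈ preord g := by
    have : f ^ 2 * t ∈ preord g := hTq.2.2 f t ht
    convert this using 1
    linear_combination (-f) * hst
  have hT1 := hT.adjoin f
  obtain ⟨k, hk, ⟨a, ha, b, hb, hab⟩, -⟩ := arch_of_ball hT1.isQM hN0
    ⟨0, hT.zero, 1, hT.one, by rw [hf]; ring⟩ s
  have h1s : 1 + s ∈ preord g := add_mem hT.one hs
  have h2 : (1 + s) * (C k - s) ∈ preord g := by
    have h3 : (1 + s) * a ∈ preord g := hT.mul _ h1s _ ha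
    have h4 : (1 + s) * f * b ∈ preord g := hT.mul _ h1 _ hb
    rw [hab]
    convert add_mem h3 h4 using 1
    ring
  have h3 : C (k + k ^ 2 / 4) - s ∈ preord g := by
    convert add_mem h2 (hT.sq (s - C (k / 2))) using 1
    have e : (C (k ^ 2 / 4) : MvPolynomial (Fin n) ℝ) = C (k / 2) ^ 2 := by
      rw [← C_pow]; ring_nf
    have e2 : (C k : MvPolynomial (Fin n) ℝ) = C (k / 2) * 2 := by
      rw [← show (C 2 : MvPolynomial (Fin n) ℝ) = 2 from map_ofNat C 2, ← C_mul]; ring_nf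
    rw [C_add, e]
    linear_combination (-s) * e2
  have h4 : C N * (C (k + k ^ 2 / 4) - s) ∈ preord g := qm_smul hTq hN0 h3
  have h5 : s * σ ∈ preord g := hT.mul _ hs _ hσT
  have h6 : C (N + N * (k + k ^ 2 / 4)) - σ ∈ preord g := by
    convert add_mem (add_mem h1 h5) h4 using 1
    rw [C_add, C_mul, hf]; ring
  exact arch_of_bdd hM (arch_of_ball hM (by positivity) (preord_sub g hM h _ h6))

theorem c_to_b {n : ℕ} {M : Set (MvPolynomial (Fin n) ℝ)} (h : IsArchimedeanQM M) :
    ∃ g ∈ M, IsCompact {x : Fin n → ℝ | 0 ≤ eval x g} := by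
  obtain ⟨N, hN⟩ := h (∑ i, (X i : MvPolynomial (Fin n) ℝ) ^ 2)
  refine ⟨_, hN, ?_⟩
  apply Metric.isCompact_of_isClosed_isBounded
  · exact isClosed_le continuous_const (MvPolynomial.continuous_eval _)
  · refine (Metric.isBounded_closedBall (x := (0 : Fin n → ℝ)) (r := N + 1)).subset ?_
    intro x hx
    rw [mem_closedBall_zero_iff, pi_norm_le_iff_of_nonneg (by positivity)]
    intro i
    have h1 : ∑ i, x i ^ 2 ≤ N := by simpa using hx
    have h2 : x i ^ 2 ≤ ∑ i, x i ^ 2 :=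
      Finset.single_le_sum (f := fun i => x i ^ 2) (fun j _ => sq_nonneg _) (Finset.mem_univ i)
    rw [Real.norm_eq_abs, abs_le]
    constructor <;> nlinarith [sq_nonneg (x i - 1), sq_nonneg (x i + 1)]

theorem b_to_a {n : ℕ} {M : Set (MvPolynomial (Fin n) ℝ)} (hM : IsQuadraticModule M)
    (h : ∃ g ∈ M, IsCompact {x : Fin n → ℝ | 0 ≤ eval x g}) :
    ∃ (m : ℕ) (g : Fin m → MvPolynomial (Fin n) ℝ),
        IsCompact (SolSet g) ∧ ∀ I : Finset (Fin m), (∏ i ∈ I, g i) ∈ M := by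
  obtain ⟨g, hg, hc⟩ := h
  refine ⟨1, fun _ => g, ?_, ?_⟩
  · convert hc using 1
    ext x; simp [SolSet]
  · intro I
    rw [Finset.prod_const]
    have : I.card ≤ 1 := by simpa using Finset.card_le_univ I
    interval_cases h : I.card
    · simpa using hM.1
    · simpa using hg

theorem stmt_1 {n : ℕ} (M : Set (MvPolynomial (Fin n) ℝ)) (hM : IsQuadraticModule M) :
    ((∃ (m : ℕ) (g : Fin m → MvPolynomial (Fin n) ℝ),
        IsCompact (SolSet g) ∧ ∀ I : Finset (Fin m), (∏ i ∈ I, g i) ∈ M) ↔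
      IsArchimedeanQM M) ∧
    ((∃ g ∈ M, IsCompact {x : Fin n → ℝ | 0 ≤ eval x g}) ↔
      IsArchimedeanQM M) := by
  have hac : (∃ (m : ℕ) (g : Fin m → MvPolynomial (Fin n) ℝ),
        IsCompact (SolSet g) ∧ ∀ I : Finset (Fin m), (∏ i ∈ I, g i) ∈ M) →
      IsArchimedeanQM M := by
    rintro ⟨m, g, hc, hg⟩
    exact a_to_c g hc hM hg
  exact ⟨⟨hac, fun h => b_to_a hM (c_to_b h)⟩, ⟨fun h => hac (b_to_a hM h), c_to_b⟩⟩
end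
end

section
/- Fix C, d, k, m, n ∈ ℕ and fix any norm ‖·‖ on the finite-dimensional real vector space of k×k matrix polynomials with entries in ℝ[X_1,…,X_n] of degree at most d. Let g = (g_1,…,g_m) ∈ ℝ[X_1,…,X_n]^m be such that the quadratic module M(g) is Archimedean. Then there exists e ∈ ℕ₀ such that every symmetric matrix polynomial H ∈ ℝ[X_1,…,X_n]_d^{k×k} satisfying ‖H‖ ≤ C and H(x) ⪰ (1/C)·I_k for all x ∈ S(g) lies in M_e^{k×k}(g). -/
open MvPolynomial Matrix

noncomputable section

/-- The extended tuple `(g₀, g₁, …, g_m)` with `g₀ := 1`. -/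
def withOne {n m : ℕ} (g : Fin m → MvPolynomial (Fin n) ℝ) :
    Fin (m + 1) → MvPolynomial (Fin n) ℝ :=
  Fin.cons 1 g

/-- A polynomial is a sum of squares. -/
def IsSOS {n : ℕ} (p : MvPolynomial (Fin n) ℝ) : Prop :=
  ∃ (l : ℕ) (q : Fin l → MvPolynomial (Fin n) ℝ), p = ∑ i, q i ^ 2

/-- The quadratic module `M(g)` generated by `g₁,…,g_m` (with `g₀ := 1`). -/
def QM {n m : ℕ} (g : Fin m → MvPolynomial (Fin n) ℝ) : Set (MvPolynomial (Fin n) ℝ) :=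
  {f | ∃ s : Fin (m + 1) → MvPolynomial (Fin n) ℝ,
    (∀ i, IsSOS (s i)) ∧ f = ∑ i, s i * withOne g i}

/-- `p ∈ ℝ[X]_{r_i}` where `r_i = (d - deg g_i)/2` if `g_i ≠ 0` and `r_i = -∞` if `g_i = 0`:
either `p = 0`, or `g_i ≠ 0` and `2 deg p + deg g_i ≤ d`. -/
def DegOK {n : ℕ} (d : ℕ) (gi p : MvPolynomial (Fin n) ℝ) : Prop :=
  p = 0 ∨ (gi ≠ 0 ∧ 2 * p.totalDegree + gi.totalDegree ≤ d)

/-- The `d`-truncated `k×k` matricial quadratic module `M_d^{k×k}(g)`. -/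
def MatTruncQM {n : ℕ} (d : ℕ) {m : ℕ} (g : Fin m → MvPolynomial (Fin n) ℝ) (k : ℕ) :
    Set (Matrix (Fin k) (Fin k) (MvPolynomial (Fin n) ℝ)) :=
  {H | ∃ (N : ℕ) (P : Fin (m + 1) → Fin N → Matrix (Fin k) (Fin k) (MvPolynomial (Fin n) ℝ)),
    (∀ i j a b, DegOK d (withOne g i) (P i j a b)) ∧
    H = ∑ i, ∑ j, withOne g i • ((P i j)ᵀ * P i j)}



section Abstract
variable {E : Type*} [AddCommGroup E] [Module ℝ E]

theorem cone_smul (P : PointedCone ℝ E) {c : ℝ} (hc : 0 ≤ c) {A : E} (hA : A ∈ P) : c • A ∈ P :=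
  P.smul_mem hc hA

theorem cone_sep (P : PointedCone ℝ E) (u : E) (hu0 : u ∈ P)
    (hu : ∀ A, ∃ c : ℝ, c • u + A ∈ P) (H : E) (hH : H ∉ P) :
    ∃ L : E →ₗ[ℝ] ℝ, (∀ A ∈ P, 0 ≤ L A) ∧ L u = 1 ∧ L H ≤ 0 := by
  have hneg : -u ∉ P := by
    intro h
    apply hH
    obtain ⟨c, hc⟩ := hu H
    by_cases hc0 : 0 ≤ c
    · have := P.add_mem hc (cone_smul P hc0 h)
      simpa using this
    · have h1 := P.add_mem hc (cone_smul P (c := -c) (by linarith) hu0)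
      simpa using h1
  have hu1 : u ≠ 0 := by
    rintro rfl
    exact hneg (by simp [P.zero_mem])
  let s : PointedCone ℝ E :=
    { carrier := {A | ∃ t : ℝ, 0 ≤ t ∧ A + t • H ∈ P}
      add_mem' := by
        rintro a b ⟨t, ht, h1⟩ ⟨r, hr, h2⟩
        refine ⟨t + r, by positivity, ?_⟩
        have := P.add_mem h1 h2
        convert this using 1
        module
      zero_mem' := ⟨0, le_rfl, by simp [P.zero_mem]⟩
      smul_mem' := by
        rintro ⟨c, hc⟩ a ⟨t, ht, h1⟩
        refine ⟨c * t, by positivity, ?_⟩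
        have := cone_smul P hc h1
        convert this using 1
        change c • a + (c * t) • H = _
        module }
  obtain ⟨L, hL1, hL2⟩ := riesz_extension s (LinearPMap.mkSpanSingleton u (1 : ℝ) hu1) (by
    rintro ⟨x, hx⟩ hxs
    obtain ⟨c, rfl⟩ := Submodule.mem_span_singleton.1 hx
    rw [show (LinearPMap.mkSpanSingleton u (1 : ℝ) hu1) ⟨c • u, hx⟩ = c by
      simpa using LinearPMap.mkSpanSingleton'_apply (σ := RingHom.id ℝ) u (1 : ℝ) _ c hx]
    by_contra hc
    have hc : c < 0 := by simpa using hc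
    obtain ⟨t, ht, h1⟩ := hxs
    change c • u + t • H ∈ P at h1
    rcases ht.eq_or_lt with rfl | ht
    · apply hneg
      have := cone_smul P (c := (-c)⁻¹) (by rw [inv_nonneg]; linarith) h1
      convert this using 1
      rw [zero_smul, add_zero, smul_smul, inv_neg, neg_mul, inv_mul_cancel₀ hc.ne]
      simp
    · apply hH
      have h2 := P.add_mem h1 (cone_smul P (c := -c) (by linarith) hu0)
      have h3 := cone_smul P (c := t⁻¹) (by positivity) h2
      convert h3 using 1
      rw [show c • u + t • H + -c • u = t • H by module, smul_smul, inv_mul_cancel₀ ht.ne', one_smul])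
    (by
      intro y
      obtain ⟨c, hc⟩ := hu y
      refine ⟨⟨c • u, Submodule.smul_mem _ _ (Submodule.mem_span_singleton_self u)⟩, 0, le_rfl, ?_⟩
      simpa using hc)
  refine ⟨L, fun A hA => hL2 A ⟨0, le_rfl, by simpa using hA⟩, ?_, ?_⟩
  · have := hL1 ⟨u, Submodule.mem_span_singleton_self u⟩
    rw [this]
    exact LinearPMap.mkSpanSingleton_apply ℝ ℝ hu1 (1 : ℝ)
  · have := hL2 (-H) ⟨1, zero_le_one, by simp [P.zero_mem]⟩
    rw [map_neg] at this
    linarith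

theorem exists_pure (P : PointedCone ℝ E) (u : E) (hu0 : u ∈ P)
    (hu : ∀ A, ∃ c : ℝ, c • u + A ∈ P) (H : E)
    (hne : ∃ L : E →ₗ[ℝ] ℝ, (∀ A ∈ P, 0 ≤ L A) ∧ L u = 1 ∧ L H ≤ 0) :
    ∃ L : E →ₗ[ℝ] ℝ, ((∀ A ∈ P, 0 ≤ L A) ∧ L u = 1 ∧ L H ≤ 0) ∧
      ∀ (L1 : E →ₗ[ℝ] ℝ) (N : ℝ), 0 < N → (∀ A ∈ P, 0 ≤ L1 A) → (∀ A ∈ P, L1 A ≤ N * L A) →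
        ∀ A, L1 A = L1 u * L A := by
  choose c hc using hu
  let K : Set (E → ℝ) := {f | (∀ A B, f (A + B) = f A + f B) ∧ (∀ (r : ℝ) A, f (r • A) = r * f A) ∧
    (∀ A ∈ P, 0 ≤ f A) ∧ f u = 1}
  have hKL : ∀ L : E →ₗ[ℝ] ℝ, (∀ A ∈ P, 0 ≤ L A) → L u = 1 → (L : E → ℝ) ∈ K := by
    intro L h1 h2
    exact ⟨fun A B => map_add L A B, fun r A => by simp, h1, h2⟩
  have hclosed : IsClosed K := by
    have e : K = (⋂ A, ⋂ B, {f : E → ℝ | f (A + B) = f A + f B}) ∩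
      ((⋂ r : ℝ, ⋂ A, {f : E → ℝ | f (r • A) = r * f A}) ∩
      ((⋂ A, ⋂ (_ : A ∈ P), {f : E → ℝ | 0 ≤ f A}) ∩ {f : E → ℝ | f u = 1})) := by
      ext f; simp [K]
    rw [e]
    refine IsClosed.inter ?_ (IsClosed.inter ?_ (IsClosed.inter ?_ ?_))
    · exact isClosed_iInter fun A => isClosed_iInter fun B =>
        isClosed_eq (continuous_apply _) (by fun_prop)
    · exact isClosed_iInter fun A => isClosed_iInter fun B =>
        isClosed_eq (continuous_apply _) (continuous_const.mul (continuous_apply _))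
    · exact isClosed_iInter fun A => isClosed_iInter fun B =>
        isClosed_le continuous_const (continuous_apply _)
    · exact isClosed_eq (continuous_apply _) continuous_const
  have hcomp : IsCompact K := by
    refine IsCompact.of_isClosed_subset
      (isCompact_univ_pi (fun A : E => isCompact_Icc (a := -(c A)) (b := c (-A)))) hclosed ?_
    rintro f ⟨h1, h2, h3, h4⟩ A -
    have a1 := h3 _ (hc A)
    have a2 := h3 _ (hc (-A))
    rw [h1, h2, h4] at a1 a2
    have : f (-A) = - f A := by
      have := h2 (-1) A
      simpa using this
    constructor <;> linarith
  have hKne : K.Nonempty := by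
    obtain ⟨L, h1, h2, -⟩ := hne
    exact ⟨_, hKL L h1 h2⟩
  let l : StrongDual ℝ (E → ℝ) := - ContinuousLinearMap.proj H
  have hl : ∀ f, l f = - f H := fun f => rfl
  have h : IsExposed ℝ K ({ y ∈ K | ∀ z ∈ K, l z ≤ l y }) := fun _ => ⟨l, rfl⟩
  obtain ⟨z, hzA, hz⟩ := hcomp.exists_isMaxOn hKne l.continuous.continuousOn
  obtain ⟨y, hy⟩ := (h.isCompact hcomp).extremePoints_nonempty ⟨z, hzA, hz⟩
  have hyK := h.isExtreme.extremePoints_subset_extremePoints hy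
  have hymin := hy.1.2
  obtain ⟨⟨y1, y2, y3, y4⟩, hyext⟩ := hyK
  let L : E →ₗ[ℝ] ℝ := { toFun := y, map_add' := y1, map_smul' := fun r A => by simpa using y2 r A }
  have hLy : ∀ A, L A = y A := fun A => rfl
  refine ⟨L, ⟨y3, y4, ?_⟩, ?_⟩
  · obtain ⟨L0, h1, h2, h3⟩ := hne
    have := hymin _ (hKL L0 h1 h2)
    rw [hl, hl] at this
    rw [hLy]; linarith
  · intro L1 N hN h1 h2
    have zero_of : ∀ L2 : E →ₗ[ℝ] ℝ, (∀ A ∈ P, 0 ≤ L2 A) → L2 u = 0 → ∀ A, L2 A = 0 := by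
      intro L2 p1 p2 A
      have a1 := p1 _ (hc A)
      have a2 := p1 _ (hc (-A))
      rw [map_add, map_smul, p2] at a1 a2
      rw [map_neg] at a2
      simp at a1 a2
      linarith
    have hLu : L u = 1 := y4
    set L2 : E →ₗ[ℝ] ℝ := N • L - L1 with hL2
    have hL2a : ∀ A, L2 A = N * L A - L1 A := fun A => by simp [hL2]
    have h2' : ∀ A ∈ P, 0 ≤ L2 A := fun A hA => by rw [hL2a]; linarith [h2 A hA]
    have t1 := h1 u hu0
    have t2 := h2' u hu0
    rcases t1.eq_or_lt with t1 | t1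
    · intro A
      rw [zero_of L1 h1 t1.symm A, ← t1, zero_mul]
    rcases t2.eq_or_lt with t2 | t2
    · intro A
      have := zero_of L2 h2' t2.symm A
      rw [hL2a] at this t2
      rw [hLu] at t2
      have e : L1 u = N := by linarith
      rw [e]; linarith
    have key := hyext (hKL ((L1 u)⁻¹ • L1)
      (fun A hA => by simpa using mul_nonneg (inv_nonneg.2 t1.le) (h1 A hA))
      (by simp [t1.ne'])) (hKL ((L2 u)⁻¹ • L2)
      (fun A hA => by simpa using mul_nonneg (inv_nonneg.2 t2.le) (h2' A hA))
      (by simp [t2.ne'])) (by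
        refine ⟨L1 u / N, L2 u / N, by positivity, by positivity, ?_, ?_⟩
        · rw [hL2a, hLu]; field_simp; ring
        · funext A
          have h5 := hL2a A
          rw [hLy] at h5
          simp only [Pi.add_apply, Pi.smul_apply, LinearMap.smul_apply, smul_eq_mul]
          field_simp
          rw [h5]; ring)
    intro A
    have := congrFun key A
    rw [← hLy] at this
    rw [← this]
    simp only [LinearMap.smul_apply, smul_eq_mul]
    field_simp
end Abstract

theorem moment_bound (w : ℕ → ℝ) (D N : ℝ) (hN : 0 < N) (h0 : ∀ j, 0 ≤ w j)
    (hCS : ∀ j, w j ^ 2 ≤ w 0 * w (2 * j)) (hD : ∀ j, w j ≤ D * N ^ j) : w 1 ≤ N * w 0 := by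
  rcases (h0 0).eq_or_lt with h | h
  · have := hCS 1
    rw [← h, zero_mul] at this
    have : w 1 = 0 := by nlinarith
    rw [this, ← h]; simp
  by_contra hlt
  push Not at hlt
  set r := w 1 / w 0 with hr
  have hrN : N < r := by rw [hr, lt_div_iff₀ h]; exact hlt
  have hw : ∀ j, w 0 * r ^ (2 ^ j) ≤ w (2 ^ j) := by
    intro j
    induction j with
    | zero => simp [hr]; field_simp; exact le_rfl
    | succ j ih =>
      have h1 := hCS (2 ^ j)
      have h2 : (w 0 * r ^ (2 ^ j)) ^ 2 ≤ w (2 ^ j) ^ 2 := by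
        have hr0 : 0 < r := hN.trans hrN
        have : 0 ≤ w 0 * r ^ (2 ^ j) := by positivity
        gcongr
      have h3 : w 0 * (w 0 * r ^ (2 ^ (j+1))) ≤ w 0 * w (2 ^ (j+1)) := by
        calc w 0 * (w 0 * r ^ (2 ^ (j+1))) = (w 0 * r ^ (2 ^ j)) ^ 2 := by
              rw [pow_succ 2 j, pow_mul]; ring
          _ ≤ _ := h2.trans h1
          _ = _ := by rw [pow_succ' 2 j]
      exact le_of_mul_le_mul_left h3 h
  have h1r : 1 < r / N := by rwa [one_lt_div hN]
  obtain ⟨j, hj⟩ := pow_unbounded_of_one_lt (D / w 0) h1r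
  have h2 : (r / N) ^ j ≤ (r / N) ^ (2 ^ j) := pow_le_pow_right₀ h1r.le j.lt_two_pow_self.le
  have h3 := (hw j).trans (hD (2 ^ j))
  have h4 : (r / N) ^ (2 ^ j) ≤ D / w 0 := by
    rw [div_pow, div_le_div_iff₀ (by positivity) h]
    linarith
  linarith

theorem cover_lemma {V : Type*} [AddCommGroup V] [Module ℝ V] [FiniteDimensional ℝ V]
    (ν : Seminorm ℝ V) (hν : ∀ x, ν x = 0 → x = 0) (K : Set V) (C : ℝ) (hK : ∀ x ∈ K, ν x ≤ C)
    {ι : Type*} [Fintype ι] (b : Module.Basis ι ℝ V) (c : ι → ℝ) (ε : ℝ) (hε : 0 < ε) :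
    ∃ t : Set V, t ⊆ K ∧ t.Finite ∧ ∀ x ∈ K, ∃ y ∈ t, ∑ j, |b.repr (x - y) j| * c j ≤ ε := by
  let _ : NormedAddCommGroup V := AddGroupNorm.toNormedAddCommGroup
    { toFun := ν, map_zero' := map_zero ν, add_le' := map_add_le_add ν, neg' := map_neg_eq_map ν,
      eq_zero_of_map_eq_zero' := hν }
  let _ : NormedSpace ℝ V := { norm_smul_le := fun r x => (map_smul_eq_mul ν r x).le }
  have hn : ∀ x, ‖x‖ = ν x := fun x => rfl
  have : ProperSpace V := FiniteDimensional.proper_real V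
  have hcont : Continuous fun x : V => ∑ j, |b.repr x j| * c j := by
    refine continuous_finsetSum _ fun j _ => ?_
    have : Continuous (b.coord j) := LinearMap.continuous_of_finiteDimensional _
    exact (this.abs).mul continuous_const
  have h0 : ∀ᶠ x in nhds (0 : V), ∑ j, |b.repr x j| * c j < ε := by
    have := hcont.tendsto 0
    simp only [map_zero, Finsupp.coe_zero, Pi.zero_apply, abs_zero, zero_mul,
      Finset.sum_const_zero] at this
    exact this.eventually (gt_mem_nhds hε)
  obtain ⟨η, hη, hball⟩ := Metric.eventually_nhds_iff.1 h0
  have htb : TotallyBounded K := by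
    refine TotallyBounded.subset (s₂ := Metric.closedBall 0 C) ?_ (isCompact_closedBall 0 C).totallyBounded
    intro x hx
    simpa [hn] using hK x hx
  obtain ⟨t, htK, htf, hcov⟩ := (totallyBounded_iff_subset.1 htb) _ (Metric.dist_mem_uniformity hη)
  refine ⟨t, htK, htf, fun x hx => ?_⟩
  obtain ⟨y, hy, hxy⟩ := Set.mem_iUnion₂.1 (hcov hx)
  refine ⟨y, hy, (hball ?_).le⟩
  have : dist x y < η := hxy
  simpa [dist_eq_norm] using this

section QMod
variable {n m k : ℕ} {g : Fin m → MvPolynomial (Fin n) ℝ}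

theorem trunc_mono {e e' : ℕ} (h : e ≤ e') {H} (hH : H ∈ MatTruncQM e g k) :
    H ∈ MatTruncQM e' g k := by
  obtain ⟨N, P, h1, h2⟩ := hH
  refine ⟨N, P, fun i j a b => ?_, h2⟩
  rcases h1 i j a b with h3 | ⟨h3, h4⟩
  · exact Or.inl h3
  · exact Or.inr ⟨h3, h4.trans h⟩

theorem trunc_zero (e : ℕ) : 0 ∈ MatTruncQM e g k :=
  ⟨0, fun _ _ => 0, fun _ j => j.elim0, by simp⟩

theorem trunc_add {e : ℕ} {A B} (hA : A ∈ MatTruncQM e g k) (hB : B ∈ MatTruncQM e g k) :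
    A + B ∈ MatTruncQM e g k := by
  obtain ⟨N, P, h1, h2⟩ := hA
  obtain ⟨N', P', h1', h2'⟩ := hB
  refine ⟨N + N', fun i => Fin.append (P i) (P' i), fun i j a b => ?_, ?_⟩
  · refine Fin.addCases (fun j => ?_) (fun j => ?_) j
    · simp only [Fin.append_left]; exact h1 i j a b
    · simp only [Fin.append_right]; exact h1' i j a b
  · rw [h2, h2', ← Finset.sum_add_distrib]
    refine Finset.sum_congr rfl fun i _ => ?_
    rw [Fin.sum_univ_add]
    simp

theorem trunc_smul {e : ℕ} {A} {c : ℝ} (hc : 0 ≤ c) (hA : A ∈ MatTruncQM e g k) :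
    c • A ∈ MatTruncQM e g k := by
  obtain ⟨N, P, h1, h2⟩ := hA
  refine ⟨N, fun i j => Real.sqrt c • P i j, fun i j a b => ?_, ?_⟩
  · rcases h1 i j a b with h3 | ⟨h3, h4⟩
    · left; simp [h3]
    · right
      refine ⟨h3, le_trans ?_ h4⟩
      have := totalDegree_smul_le (Real.sqrt c) (P i j a b)
      simp only [Matrix.smul_apply]
      omega
  · rw [h2, Finset.smul_sum]
    refine Finset.sum_congr rfl fun i _ => ?_
    rw [Finset.smul_sum]
    refine Finset.sum_congr rfl fun j _ => ?_
    rw [Matrix.transpose_smul, Matrix.smul_mul, Matrix.mul_smul, smul_smul, Real.mul_self_sqrt hc,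
      smul_comm]

theorem trunc_single (i : Fin (m + 1)) (P : Matrix (Fin k) (Fin k) (MvPolynomial (Fin n) ℝ)) :
    ∃ e, withOne g i • (Pᵀ * P) ∈ MatTruncQM e g k := by
  by_cases hg : withOne g i = 0
  · exact ⟨0, by rw [hg, zero_smul]; exact trunc_zero 0⟩
  refine ⟨2 * (∑ a, ∑ b, (P a b).totalDegree) + (withOne g i).totalDegree, 1,
    fun i' _ => if i' = i then P else 0, fun i' j a b => ?_, ?_⟩
  · by_cases h : i' = i
    · subst h
      right
      refine ⟨hg, ?_⟩
      have h1 : (P a b).totalDegree ≤ ∑ b, (P a b).totalDegree :=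
        Finset.single_le_sum (f := fun b => (P a b).totalDegree) (fun _ _ => Nat.zero_le _) (Finset.mem_univ b)
      have h2 : ∑ b, (P a b).totalDegree ≤ ∑ a, ∑ b, (P a b).totalDegree :=
        Finset.single_le_sum (f := fun a => ∑ b, (P a b).totalDegree) (fun _ _ => Nat.zero_le _) (Finset.mem_univ a)
      simp only [if_true]
      omega
    · left; simp [h]
  · rw [Finset.sum_eq_single i]
    · simp
    · intro b _ hb; simp [hb]
    · simp

theorem trunc_ind {Q : Matrix (Fin k) (Fin k) (MvPolynomial (Fin n) ℝ) → Prop} (h0 : Q 0)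
    (hadd : ∀ A B, Q A → Q B → Q (A + B)) (hs : ∀ i P, Q (withOne g i • (Pᵀ * P))) {e A}
    (hA : A ∈ MatTruncQM e g k) : Q A := by
  obtain ⟨N, P, -, rfl⟩ := hA
  exact Finset.sum_induction _ Q hadd h0 fun i _ => Finset.sum_induction _ Q hadd h0 fun j _ => hs _ _

theorem trunc_symm {e A} (hA : A ∈ MatTruncQM e g k) : Aᵀ = A :=
  trunc_ind (Q := fun A => Aᵀ = A) (by simp) (fun A B h1 h2 => by simp [h1, h2])
    (fun i P => by simp [Matrix.transpose_mul]) hA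

/-- matricial quadratic module, no degree bounds, plus skew matrices. -/
def MM {n m : ℕ} (g : Fin m → MvPolynomial (Fin n) ℝ) (k : ℕ) :
    PointedCone ℝ (Matrix (Fin k) (Fin k) (MvPolynomial (Fin n) ℝ)) where
  carrier := {A | ∃ e, A + Aᵀ ∈ MatTruncQM e g k}
  add_mem' := by
    rintro A B ⟨e, h1⟩ ⟨e', h2⟩
    refine ⟨max e e', ?_⟩
    have := trunc_add (trunc_mono (le_max_left e e') h1) (trunc_mono (le_max_right e e') h2)
    convert this using 1
    rw [Matrix.transpose_add]; abel
  zero_mem' := ⟨0, by simpa using trunc_zero 0⟩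
  smul_mem' := by
    rintro ⟨c, hc⟩ A ⟨e, h⟩
    refine ⟨e, ?_⟩
    have := trunc_smul hc h
    change c • A + (c • A)ᵀ ∈ _
    rwa [Matrix.transpose_smul, ← smul_add]

theorem mem_MM {A} : A ∈ MM g k ↔ ∃ e, A + Aᵀ ∈ MatTruncQM e g k := Iff.rfl

theorem MM_of_trunc {e A} (hA : A ∈ MatTruncQM e g k) : A ∈ MM g k :=
  ⟨e, by rw [trunc_symm hA]; exact trunc_add hA hA⟩

theorem trunc_of_MM {A} (hs : Aᵀ = A) (hA : A ∈ MM g k) : ∃ e, A ∈ MatTruncQM e g k := by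
  obtain ⟨e, he⟩ := hA
  refine ⟨e, ?_⟩
  have := trunc_smul (c := 1/2) (by norm_num) he
  rw [hs] at this
  convert this using 1
  module

theorem MM_single (i : Fin (m + 1)) (P) : withOne g i • (Pᵀ * P) ∈ MM g k :=
  (trunc_single i P).elim fun _ h => MM_of_trunc h

theorem MM_sq (P : Matrix (Fin k) (Fin k) (MvPolynomial (Fin n) ℝ)) : Pᵀ * P ∈ MM g k := by
  have := MM_single (g := g) 0 P
  simpa [withOne] using this

theorem MM_skew {A : Matrix (Fin k) (Fin k) (MvPolynomial (Fin n) ℝ)} (h : Aᵀ = -A) :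
    A ∈ MM g k := ⟨0, by rw [h]; simpa using trunc_zero 0⟩

theorem MM_QM {s : MvPolynomial (Fin n) ℝ} (hs : s ∈ QM g) (P) : s • (Pᵀ * P) ∈ MM g k := by
  obtain ⟨σ, h1, rfl⟩ := hs
  rw [Finset.sum_smul]
  refine Submodule.sum_mem _ fun i _ => ?_
  obtain ⟨l, q, hq⟩ := h1 i
  rw [hq, Finset.sum_mul, Finset.sum_smul]
  refine Submodule.sum_mem _ fun j _ => ?_
  convert MM_single (g := g) i (q j • P) using 1
  rw [Matrix.transpose_smul, Matrix.smul_mul, Matrix.mul_smul, smul_smul, smul_smul]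
  congr 1; ring

theorem MM_one : (1 : Matrix (Fin k) (Fin k) (MvPolynomial (Fin n) ℝ)) ∈ MM g k := by
  simpa using MM_sq (g := g) 1

/-- bounded elements -/
theorem MM_bdd (harch : IsArchimedeanQM (QM g)) (A : Matrix (Fin k) (Fin k) (MvPolynomial (Fin n) ℝ)) :
    ∃ c : ℝ, 0 ≤ c ∧ c • 1 + A ∈ MM g k := by
  have hadd : ∀ A B : Matrix (Fin k) (Fin k) (MvPolynomial (Fin n) ℝ),
      (∃ c : ℝ, 0 ≤ c ∧ c • 1 + A ∈ MM g k) → (∃ c : ℝ, 0 ≤ c ∧ c • 1 + B ∈ MM g k) →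
      (∃ c : ℝ, 0 ≤ c ∧ c • 1 + (A + B) ∈ MM g k) := by
    rintro A B ⟨c, hc, h1⟩ ⟨c', hc', h2⟩
    refine ⟨c + c', by positivity, ?_⟩
    convert Submodule.add_mem _ h1 h2 using 1
    module
  have h0 : (∃ c : ℝ, 0 ≤ c ∧ c • 1 + (0 : Matrix (Fin k) (Fin k) (MvPolynomial (Fin n) ℝ)) ∈ MM g k) :=
    ⟨0, le_rfl, by simp⟩
  rw [Matrix.matrix_eq_sum_single A]
  refine Finset.sum_induction _ _ hadd h0 fun a _ => Finset.sum_induction _ _ hadd h0 fun b _ => ?_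
  generalize A a b = f
  obtain ⟨N1, hN1⟩ := harch (-f)
  obtain ⟨N2, hN2⟩ := harch f
  set Pu : Matrix (Fin k) (Fin k) (MvPolynomial (Fin n) ℝ) := single a a 1 + single a b 1 with hPu
  set Pw : Matrix (Fin k) (Fin k) (MvPolynomial (Fin n) ℝ) := single a a 1 - single a b 1 with hPw
  have hu : Puᵀ * Pu = single a a 1 + single a b 1 + single b a 1 + single b b 1 := by
    simp [hPu, Matrix.mul_add, Matrix.add_mul]; abel
  have hw : Pwᵀ * Pw = single a a 1 - single a b 1 - single b a 1 + single b b 1 := by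
    simp [hPw, Matrix.mul_sub, Matrix.sub_mul]; abel
  have hp : ∀ c : Fin k, 1 - single c c (1 : MvPolynomial (Fin n) ℝ) ∈ MM g k := by
    intro c
    convert MM_sq (g := g) (1 - single c c (1 : MvPolynomial (Fin n) ℝ)) using 1
    simp [Matrix.mul_sub, Matrix.sub_mul]
  have hpp := Submodule.add_mem _ (cone_smul _ (zero_le_two (α := ℝ)) (hp a))
    (cone_smul _ (zero_le_two (α := ℝ)) (hp b))
  have h4w : (4 : ℝ) • 1 - Pwᵀ * Pw ∈ MM g k := by
    convert Submodule.add_mem _ (MM_sq (g := g) Pu) hpp using 1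
    rw [hu, hw]; module
  have h4u : (4 : ℝ) • 1 - Puᵀ * Pu ∈ MM g k := by
    convert Submodule.add_mem _ (MM_sq (g := g) Pw) hpp using 1
    rw [hu, hw]; module
  have k1 := MM_QM hN1 Pu
  have k2 := MM_QM hN2 Pw
  have k3 := cone_smul _ (Nat.cast_nonneg (α := ℝ) N1) h4u
  have k4 := cone_smul _ (Nat.cast_nonneg (α := ℝ) N2) h4w
  have k5 : (2 : ℝ) • (single a b f - single b a f) ∈ MM g k := MM_skew (by
    simp [Matrix.transpose_sub]; module)
  refine ⟨N1 + N2, by positivity, ?_⟩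
  have k6 := cone_smul _ (by norm_num : (0 : ℝ) ≤ 1 / 4)
    (Submodule.add_mem _ (Submodule.add_mem _ (Submodule.add_mem _ (Submodule.add_mem _ k1 k2) k3) k4) k5)
  convert k6 using 1
  have e1 : ∀ (N : ℕ) (B : Matrix (Fin k) (Fin k) (MvPolynomial (Fin n) ℝ)),
      (N : MvPolynomial (Fin n) ℝ) • B = (N : ℝ) • B := by
    intro N B
    rw [Nat.cast_smul_eq_nsmul, Nat.cast_smul_eq_nsmul]
  have e2 : f • (Puᵀ * Pu) - f • (Pwᵀ * Pw) = (2 : ℝ) • (single a b f + single b a f) := by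
    rw [← smul_sub, hu, hw]
    have : ∀ a b : Fin k, single a b f = f • single a b (1 : MvPolynomial (Fin n) ℝ) := by
      intro a b; simp
    rw [this a b, this b a, ← smul_add, smul_comm]
    congr 1
    module
  rw [sub_smul, sub_smul, neg_smul, e1, e1]
  have e3 : f • (Puᵀ * Pu) = f • (Pwᵀ * Pw) + (2 : ℝ) • (single a b f + single b a f) := by
    rw [← e2]; abel
  rw [e3]
  generalize f • (Pwᵀ * Pw) = Z
  module

end QMod

section Putinar
open scoped MatrixOrder in
theorem psd_factor {k : ℕ} {A : Matrix (Fin k) (Fin k) ℝ} (hA : A.PosSemidef) :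
    ∃ B : Matrix (Fin k) (Fin k) ℝ, A = Bᵀ * B := by
  have h0 : 0 ≤ A := hA.nonneg
  obtain ⟨X, hX, -, h⟩ := CFC.exists_sqrt_of_isSelfAdjoint_of_quasispectrumRestricts hA.1
          (QuasispectrumRestricts.nnreal_of_nonneg h0)
  refine ⟨X, ?_⟩
  have h2 : Xᵀ = X := by
    have := hX.star_eq
    rwa [Matrix.star_eq_conjTranspose, Matrix.conjTranspose_eq_transpose_of_trivial] at this
  rw [h2]
  simpa [pow_two] using h.symm

variable {n m k : ℕ} {g : Fin m → MvPolynomial (Fin n) ℝ}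

/-- multiplication by a polynomial followed by a functional -/
def mulL (f : MvPolynomial (Fin n) ℝ)
    (L : Matrix (Fin k) (Fin k) (MvPolynomial (Fin n) ℝ) →ₗ[ℝ] ℝ) :
    Matrix (Fin k) (Fin k) (MvPolynomial (Fin n) ℝ) →ₗ[ℝ] ℝ where
  toFun A := L (f • A)
  map_add' A B := by rw [smul_add, map_add]
  map_smul' r A := by rw [smul_comm, map_smul]; rfl

theorem mulL_apply (f : MvPolynomial (Fin n) ℝ)
    (L : Matrix (Fin k) (Fin k) (MvPolynomial (Fin n) ℝ) →ₗ[ℝ] ℝ) (A) :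
    mulL f L A = L (f • A) := rfl

theorem pos_transpose {L : Matrix (Fin k) (Fin k) (MvPolynomial (Fin n) ℝ) →ₗ[ℝ] ℝ}
    (hL : ∀ A ∈ MM g k, 0 ≤ L A) (A) : L Aᵀ = L A := by
  have h1 := hL (Aᵀ - A) (MM_skew (by simp))
  have h2 := hL (A - Aᵀ) (MM_skew (by simp))
  rw [map_sub] at h1 h2
  linarith

theorem pos_of_gen {L : Matrix (Fin k) (Fin k) (MvPolynomial (Fin n) ℝ) →ₗ[ℝ] ℝ}
    (ht : ∀ A, L Aᵀ = L A) (hs : ∀ i P, 0 ≤ L (withOne g i • (Pᵀ * P))) :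
    ∀ A ∈ MM g k, 0 ≤ L A := by
  rintro A ⟨e, he⟩
  have := trunc_ind (Q := fun A => 0 ≤ L A) (by simp) (fun A B h1 h2 => by
    rw [map_add]; positivity) hs he
  rw [map_add, ht] at this
  linarith

theorem sq_smul_gen (p : MvPolynomial (Fin n) ℝ) (i : Fin (m + 1))
    (P : Matrix (Fin k) (Fin k) (MvPolynomial (Fin n) ℝ)) :
    p ^ 2 • (withOne g i • (Pᵀ * P)) = withOne g i • ((p • P)ᵀ * (p • P)) := by
  rw [Matrix.transpose_smul, Matrix.smul_mul, Matrix.mul_smul, smul_smul, smul_smul, smul_smul]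
  congr 1; ring

theorem sq_smul_sq (p : MvPolynomial (Fin n) ℝ) 
    (P : Matrix (Fin k) (Fin k) (MvPolynomial (Fin n) ℝ)) :
    p ^ 2 • (Pᵀ * P) = ((p • P)ᵀ * (p • P)) := by
  rw [Matrix.transpose_smul, Matrix.smul_mul, Matrix.mul_smul, smul_smul, pow_two]

theorem pos_mul_bound (harch : IsArchimedeanQM (QM g))
    {L : Matrix (Fin k) (Fin k) (MvPolynomial (Fin n) ℝ) →ₗ[ℝ] ℝ}
    (hL : ∀ A ∈ MM g k, 0 ≤ L A) (p : MvPolynomial (Fin n) ℝ) :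
    (∀ A ∈ MM g k, 0 ≤ mulL (p ^ 2) L A) ∧
      ∃ N : ℝ, 0 < N ∧ ∀ A ∈ MM g k, mulL (p ^ 2) L A ≤ N * L A := by
  have ht := pos_transpose hL
  have hsq : ∀ (q : MvPolynomial (Fin n) ℝ) (i : Fin (m+1)) P,
      0 ≤ L (q ^ 2 • (withOne g i • (Pᵀ * P))) := fun q i P => by
    rw [sq_smul_gen]; exact hL _ (MM_single i _)
  have hsq' : ∀ (q : MvPolynomial (Fin n) ℝ) P,
      0 ≤ L (q ^ 2 • (Pᵀ * P)) := fun q P => by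
    rw [sq_smul_sq]; exact hL _ (MM_sq _)
  constructor
  · refine pos_of_gen (fun A => ?_) (fun i P => ?_)
    · rw [mulL_apply, mulL_apply, ← Matrix.transpose_smul, ht]
    · exact hsq p i P
  obtain ⟨N0, hN0⟩ := harch (p ^ 2)
  refine ⟨N0 + 1, by positivity, ?_⟩
  set N : ℝ := N0 + 1 with hN
  have hNpos : 0 < N := by positivity
  have hS : ∀ S : Matrix (Fin k) (Fin k) (MvPolynomial (Fin n) ℝ),
      L (p ^ 2 • (Sᵀ * S)) ≤ N * L (Sᵀ * S) := by
    intro S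
    have h1 := hL _ (MM_QM hN0 S)
    rw [sub_smul, map_sub, Nat.cast_smul_eq_nsmul, map_nsmul, nsmul_eq_mul] at h1
    have h2 := hL _ (MM_sq S)
    rw [hN]; linarith
  have hpow : ∀ (j : ℕ) (S : Matrix (Fin k) (Fin k) (MvPolynomial (Fin n) ℝ)),
      L ((p ^ j) ^ 2 • (Sᵀ * S)) ≤ N ^ j * L (Sᵀ * S) := by
    intro j S
    induction j with
    | zero => simp
    | succ j ih =>
      have h1 := hS (p ^ j • S)
      rw [← sq_smul_sq, smul_smul] at h1
      calc _ = L ((p ^ 2 * (p ^ j) ^ 2) • (Sᵀ * S)) := by congr 2; ring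
        _ ≤ N * (N ^ j * L (Sᵀ * S)) := h1.trans (by gcongr)
        _ = _ := by ring
  suffices h : ∀ A ∈ MM g k, 0 ≤ (N • L - mulL (p ^ 2) L) A by
    intro A hA
    have := h A hA
    simp only [LinearMap.sub_apply, LinearMap.smul_apply, smul_eq_mul] at this
    linarith
  refine pos_of_gen (fun A => ?_) (fun i P => ?_)
  · simp only [LinearMap.sub_apply, LinearMap.smul_apply, mulL_apply]
    rw [← Matrix.transpose_smul, ht, ht]
  simp only [LinearMap.sub_apply, LinearMap.smul_apply, smul_eq_mul, mulL_apply]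
  set Q := withOne g i • (Pᵀ * P) with hQ
  have hQt : Qᵀ = Q := by simp [hQ, Matrix.transpose_mul]
  have hsqQ : ∀ q : MvPolynomial (Fin n) ℝ, 0 ≤ L (q ^ 2 • Q) := fun q => hsq q i P
  clear_value Q
  have key := moment_bound (fun j => L ((p ^ j) ^ 2 • Q)) (L ((Q + 1)ᵀ * (Q + 1)) / 4) N hNpos
    (fun j => hsqQ _) (fun j => ?_) (fun j => ?_)
  · simp only [pow_one, pow_zero, one_pow, one_smul] at key
    linarith
  · simp only [pow_zero, one_pow, one_smul]
    have : ∀ x : ℝ, 0 ≤ L Q * (x * x) + (-2 * L ((p ^ j) ^ 2 • Q)) * x + L ((p ^ (2 * j)) ^ 2 • Q) := by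
      intro x
      have h := hsqQ ((p ^ j) ^ 2 - MvPolynomial.C x)
      have e : ((p ^ j) ^ 2 - MvPolynomial.C x) ^ 2 • Q =
          (p ^ (2 * j)) ^ 2 • Q - (2 * x) • ((p ^ j) ^ 2 • Q) + (x * x) • Q := by
        have e1 : ∀ (r : ℝ) (B : Matrix (Fin k) (Fin k) (MvPolynomial (Fin n) ℝ)),
          r • B = (MvPolynomial.C r : MvPolynomial (Fin n) ℝ) • B := by
          intro r B
          rw [← MvPolynomial.algebraMap_eq, algebraMap_smul]
        rw [e1, e1, smul_smul, ← sub_smul, ← add_smul]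
        congr 1
        simp only [map_mul]
        rw [show (MvPolynomial.C (2 : ℝ) : MvPolynomial (Fin n) ℝ) = 2 from map_ofNat _ 2]
        ring
      rw [e, map_add, map_sub, L.map_smul (2 * x), L.map_smul (x * x), smul_eq_mul, smul_eq_mul] at h
      linarith
    have := discrim_le_zero this
    rw [discrim] at this
    nlinarith
  · have h1 := hpow j (Q + 1)
    have h2 := hsq' (p ^ j) (Q - 1)
    have e : (Q + 1)ᵀ * (Q + 1) - (Q - 1)ᵀ * (Q - 1) = (4 : ℝ) • Q := by
      simp only [Matrix.transpose_add, Matrix.transpose_sub, hQt, Matrix.transpose_one,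
        Matrix.add_mul, Matrix.mul_add, Matrix.sub_mul, Matrix.mul_sub, Matrix.mul_one, Matrix.one_mul]
      generalize Q * Q = Z
      module
    have e2 : L ((p ^ j) ^ 2 • ((4 : ℝ) • Q)) = 4 * L ((p ^ j) ^ 2 • Q) := by
      rw [smul_comm, map_smul, smul_eq_mul]
    rw [← e, smul_sub, map_sub] at e2
    linarith

theorem putinar (harch : IsArchimedeanQM (QM g))
    (H : Matrix (Fin k) (Fin k) (MvPolynomial (Fin n) ℝ)) (hsymm : H.IsSymm) (δ : ℝ) (hδ : 0 < δ)
    (hpos : ∀ x ∈ SolSet g, ∀ v : Fin k → ℝ,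
        δ * (v ⬝ᵥ v) ≤ v ⬝ᵥ (H.map (eval x)) *ᵥ v) : H ∈ MM g k := by
  by_contra hH
  have hbd : ∀ A, ∃ c : ℝ, c • 1 + A ∈ MM g k := fun A => by
    obtain ⟨c, -, h⟩ := MM_bdd harch A
    exact ⟨c, h⟩
  obtain ⟨L, ⟨hL, hL1, hLH⟩, hpure⟩ := exists_pure (MM g k) 1 MM_one hbd H
    (cone_sep (MM g k) 1 MM_one hbd H hH)
  have hmulsq : ∀ (p : MvPolynomial (Fin n) ℝ) A, L (p ^ 2 • A) = L (p ^ 2 • 1) * L A := by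
    intro p A
    obtain ⟨h1, N, hN, h2⟩ := pos_mul_bound harch hL p
    exact hpure _ N hN h1 h2 A
  have hmul : ∀ (f : MvPolynomial (Fin n) ℝ) A, L (f • A) = L (f • 1) * L A := by
    intro f A
    have e : ∀ B : Matrix (Fin k) (Fin k) (MvPolynomial (Fin n) ℝ),
        (4 : ℝ) * L (f • B) = L ((f + 1) ^ 2 • B) - L ((f - 1) ^ 2 • B) := by
      intro B
      rw [← map_sub, ← sub_smul, ← smul_eq_mul, ← map_smul]
      congr 1
      rw [show (f + 1) ^ 2 - (f - 1) ^ 2 = (4 : ℝ) • f by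
        rw [MvPolynomial.smul_eq_C_mul, show (MvPolynomial.C (4 : ℝ) : MvPolynomial (Fin n) ℝ) = 4 from map_ofNat _ 4]
        ring]
      rw [smul_assoc]
    have e1 := e A
    have e2 := e 1
    rw [hmulsq, hmulsq (f - 1)] at e1
    have : 4 * L (f • A) = 4 * (L (f • 1) * L A) := by rw [e1, ← mul_assoc, e2]; ring
    linarith
  let φ : MvPolynomial (Fin n) ℝ →ₐ[ℝ] ℝ := AlgHom.ofLinearMap
    { toFun := fun f => L (f • 1)
      map_add' := fun a b => by rw [add_smul, map_add]
      map_smul' := fun r a => by rw [smul_assoc, map_smul]; rfl }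
    (by simpa using hL1)
    (fun a b => by
      change L ((a * b) • 1) = L (a • 1) * L (b • 1)
      rw [mul_smul, hmul])
  have hφ : ∀ f, φ f = L (f • 1) := fun f => rfl
  set x : Fin n → ℝ := fun i => φ (X i) with hx
  have hev : ∀ f, L (f • 1) = eval x f := by
    intro f
    rw [← hφ]
    have : φ = MvPolynomial.aeval x := MvPolynomial.algHom_ext (by intro i; simp [hx])
    rw [this, MvPolynomial.aeval_eq_eval]
  have hxS : x ∈ SolSet g := by
    intro i
    rw [← hev]
    have := hL _ (MM_single (g := g) i.succ 1)
    simpa [withOne] using this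
  have hconst : ∀ A, L A = L ((A.map (eval x)).map MvPolynomial.C) := by
    intro A
    conv_lhs => rw [Matrix.matrix_eq_sum_single A]
    conv_rhs => rw [Matrix.matrix_eq_sum_single ((A.map (eval x)).map MvPolynomial.C)]
    simp only [map_sum]
    refine Finset.sum_congr rfl fun a _ => Finset.sum_congr rfl fun b _ => ?_
    have : ∀ f, single a b f = f • single a b (1 : MvPolynomial (Fin n) ℝ) := by
      intro f; simp
    rw [this, this (((A.map (eval x)).map MvPolynomial.C) a b), hmul (A a b), hmul (((A.map (eval x)).map MvPolynomial.C) a b), hev, hev]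
    simp
  have hpsd : (H.map (eval x) - δ • 1).PosSemidef := by
    refine Matrix.PosSemidef.of_dotProduct_mulVec_nonneg ?_ fun v => ?_
    · ext a b
      have := congrFun (congrFun hsymm b) a
      simp only [Matrix.transpose_apply] at this
      simp [this, Matrix.one_apply, eq_comm]
    · have := hpos x hxS v
      simp only [star_trivial, Matrix.sub_mulVec, dotProduct_sub, Matrix.smul_mulVec, Matrix.one_mulVec,
        dotProduct_smul, smul_eq_mul]
      linarith
  obtain ⟨B, hB⟩ := psd_factor hpsd
  have h1 := hL _ (MM_sq (B.map MvPolynomial.C))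
  have h2 : (B.map (MvPolynomial.C (σ := Fin n)))ᵀ * B.map MvPolynomial.C =
      (H.map (eval x)).map MvPolynomial.C - δ • 1 := by
    rw [← Matrix.transpose_map, ← Matrix.map_mul, ← hB]
    ext a b
    by_cases hab : a = b
    · simp [hab, MvPolynomial.smul_eq_C_mul]
    · simp [hab]
  rw [h2, map_sub, ← hconst, map_smul, hL1, smul_eq_mul] at h1
  linarith

end Putinar

section Final
variable {n m k : ℕ} {g : Fin m → MvPolynomial (Fin n) ℝ}

/-- truncated version of `MM`. -/
def TM {n m : ℕ} (g : Fin m → MvPolynomial (Fin n) ℝ) (k e : ℕ) :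
    PointedCone ℝ (Matrix (Fin k) (Fin k) (MvPolynomial (Fin n) ℝ)) where
  carrier := {A | A + Aᵀ ∈ MatTruncQM e g k}
  add_mem' := by
    intro A B h1 h2
    have := trunc_add h1 h2
    change A + B + (A + B)ᵀ ∈ MatTruncQM e g k
    convert this using 1
    rw [Matrix.transpose_add]; abel
  zero_mem' := by
    change (0 : Matrix (Fin k) (Fin k) (MvPolynomial (Fin n) ℝ)) + 0ᵀ ∈ MatTruncQM e g k
    simpa using trunc_zero e
  smul_mem' := by
    rintro ⟨c, hc⟩ A h
    have := trunc_smul hc h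
    change c • A + (c • A)ᵀ ∈ MatTruncQM e g k
    rwa [Matrix.transpose_smul, ← smul_add]

theorem TM_mono {e e' : ℕ} (h : e ≤ e') {A} (hA : A ∈ TM g k e) : A ∈ TM g k e' :=
  trunc_mono (H := A + Aᵀ) h hA

theorem exists_TM {A} (hA : A ∈ MM g k) : ∃ e, A ∈ TM g k e := hA

theorem trunc_of_TM {A} {e : ℕ} (hs : Aᵀ = A) (hA : A ∈ TM g k e) : A ∈ MatTruncQM e g k := by
  have he : A + Aᵀ ∈ MatTruncQM e g k := hA
  have := trunc_smul (c := 1/2) (by norm_num) he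
  rw [hs] at this
  convert this using 1
  module

theorem TM_one (e : ℕ) : (1 : Matrix (Fin k) (Fin k) (MvPolynomial (Fin n) ℝ)) ∈ TM g k e := by
  have : (1 : Matrix (Fin k) (Fin k) (MvPolynomial (Fin n) ℝ)) ∈ MatTruncQM e g k := by
    refine ⟨1, fun i _ => if i = 0 then 1 else 0, fun i j a b => ?_, ?_⟩
    · by_cases h : i = 0
      · subst h
        right
        refine ⟨by simp [withOne], ?_⟩
        by_cases hab : a = b
        · subst hab; simp [withOne]
        · simp [withOne, hab]
      · left; simp [h]
    · rw [Finset.sum_eq_single 0]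
      · simp [withOne]
      · intro b _ hb; simp [hb]
      · simp
  change (1 : Matrix (Fin k) (Fin k) (MvPolynomial (Fin n) ℝ)) + 1ᵀ ∈ MatTruncQM e g k
  rw [Matrix.transpose_one]
  exact trunc_add this this

/-- the inclusion of matrices with entries of bounded degree. -/
def inclV (n k d : ℕ) : (Fin k → Fin k → restrictTotalDegree (Fin n) ℝ d) →ₗ[ℝ]
    Matrix (Fin k) (Fin k) (MvPolynomial (Fin n) ℝ) where
  toFun v := Matrix.of fun a b => (v a b : MvPolynomial (Fin n) ℝ)
  map_add' _ _ := rfl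
  map_smul' _ _ := rfl

end Final

theorem stmt_2 (C d k m n : ℕ) (hC : 0 < C) (hd : 0 < d) (hk : 0 < k) (hm : 0 < m)
    (hn : 0 < n)
    (ν : Seminorm ℝ (Matrix (Fin k) (Fin k) (MvPolynomial (Fin n) ℝ)))
    (hν : ∀ H : Matrix (Fin k) (Fin k) (MvPolynomial (Fin n) ℝ),
      (∀ a b, (H a b).totalDegree ≤ d) → ν H = 0 → H = 0)
    (g : Fin m → MvPolynomial (Fin n) ℝ) (harch : IsArchimedeanQM (QM g)) :
    ∃ e : ℕ, ∀ H : Matrix (Fin k) (Fin k) (MvPolynomial (Fin n) ℝ),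
      H.IsSymm → (∀ a b, (H a b).totalDegree ≤ d) → ν H ≤ (C : ℝ) →
      (∀ x ∈ SolSet g, ∀ v : Fin k → ℝ,
        (1 / (C : ℝ)) * (v ⬝ᵥ v) ≤ v ⬝ᵥ (H.map (eval x)) *ᵥ v) →
      H ∈ MatTruncQM e g k := by
  let V := Fin k → Fin k → restrictTotalDegree (Fin n) ℝ d
  let T : V →ₗ[ℝ] Matrix (Fin k) (Fin k) (MvPolynomial (Fin n) ℝ) := inclV n k d
  have hTdeg : ∀ v a b, (T v a b).totalDegree ≤ d := fun v a b =>
    (mem_restrictTotalDegree _ _ _).1 (v a b).2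
  have hTinj : ∀ v, T v = 0 → v = 0 := by
    intro v hv
    funext a b
    exact Subtype.ext (congrFun (congrFun hv a) b)
  have hCpos : (0 : ℝ) < C := by exact_mod_cast hC
  set δ : ℝ := 1 / (2 * C) with hδ
  have hδ0 : 0 < δ := by positivity
  let b := Module.finBasis ℝ V
  have hb : ∀ j, ∃ (c : ℝ) (e : ℕ), 0 ≤ c ∧ c • 1 + T (b j) ∈ TM g k e ∧ c • 1 - T (b j) ∈ TM g k e := by
    intro j
    obtain ⟨c1, hc1, h1⟩ := MM_bdd harch (T (b j))
    obtain ⟨c2, hc2, h2⟩ := MM_bdd harch (-T (b j))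
    obtain ⟨e1, h1⟩ := exists_TM h1
    obtain ⟨e2, h2⟩ := exists_TM h2
    refine ⟨c1 + c2, max e1 e2, by positivity, ?_, ?_⟩
    · convert Submodule.add_mem _ (TM_mono (le_max_left e1 e2) h1) (cone_smul _ hc2 (TM_one _)) using 1
      module
    · convert Submodule.add_mem _ (TM_mono (le_max_right e1 e2) h2) (cone_smul _ hc1 (TM_one _)) using 1
      module
  choose c eb hc hb1 hb2 using hb
  set e1 := Finset.univ.sup eb with he1
  have hsmall : ∀ v : V, (∑ j, |b.repr v j| * c j) • 1 + T v ∈ TM g k e1 := by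
    intro v
    have : (∑ j, |b.repr v j| * c j) • 1 + T v =
        ∑ j, ((|b.repr v j| * c j) • 1 + (b.repr v j) • T (b j)) := by
      rw [Finset.sum_add_distrib, ← Finset.sum_smul]
      congr 1
      conv_lhs => rw [← b.sum_repr v]
      rw [map_sum]
      simp only [map_smul]
    rw [this]
    refine Submodule.sum_mem _ fun j _ => ?_
    have hle : eb j ≤ e1 := Finset.le_sup (Finset.mem_univ j)
    rcases le_total 0 (b.repr v j) with h | h
    · rw [abs_of_nonneg h]
      convert cone_smul _ h (TM_mono hle (hb1 j)) using 1
      module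
    · rw [abs_of_nonpos h]
      convert cone_smul _ (neg_nonneg.2 h) (TM_mono hle (hb2 j)) using 1
      module
  let K : Set V := {v | (T v).IsSymm ∧ ν (T v) ≤ C ∧ ∀ x ∈ SolSet g, ∀ w : Fin k → ℝ,
        (1 / (C : ℝ)) * (w ⬝ᵥ w) ≤ w ⬝ᵥ ((T v).map (eval x)) *ᵥ w}
  obtain ⟨t, htK, htf, hcov⟩ := cover_lemma (ν.comp T)
    (fun v hv => hTinj v (hν _ (hTdeg v) hv)) K C (fun v hv => hv.2.1) b c δ hδ0
  have hput : ∀ v ∈ K, T v - δ • 1 ∈ MM g k := by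
    rintro v ⟨hs, -, hp⟩
    refine putinar harch _ ?_ δ hδ0 fun x hx w => ?_
    · rw [Matrix.IsSymm, Matrix.transpose_sub, Matrix.transpose_smul, Matrix.transpose_one, hs.eq]
    · have h1 := hp x hx w
      have e : (T v - δ • 1).map (eval x) = (T v).map (eval x) - δ • 1 := by
        ext a b
        by_cases hab : a = b
        · simp [hab, MvPolynomial.smul_eval]
        · simp [hab]
      rw [e, Matrix.sub_mulVec, dotProduct_sub, Matrix.smul_mulVec, Matrix.one_mulVec,
        dotProduct_smul, smul_eq_mul]
      have h2 : 1 / (C : ℝ) = δ + δ := by rw [hδ]; field_simp; norm_num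
      rw [h2] at h1
      linarith
  have hput' : ∀ v : V, ∃ e, v ∈ K → T v - δ • 1 ∈ TM g k e := by
    intro v
    by_cases hv : v ∈ K
    · obtain ⟨e, he⟩ := exists_TM (hput v hv)
      exact ⟨e, fun _ => he⟩
    · exact ⟨0, fun h => absurd h hv⟩
  choose ev hev using hput'
  refine ⟨max e1 (htf.toFinset.sup ev), fun H hs hdeg hnu hp => ?_⟩
  let v : V := fun a b => ⟨H a b, (mem_restrictTotalDegree _ _ _).2 (hdeg a b)⟩
  have hTv : T v = H := rfl
  have hvK : v ∈ K := ⟨hs, hnu, hp⟩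
  obtain ⟨y, hy, hxy⟩ := hcov v hvK
  refine trunc_of_TM hs ?_
  have h1 := TM_mono (le_max_left e1 (htf.toFinset.sup ev)) (hsmall (v - y))
  have h2 := TM_mono ((Finset.le_sup (f := ev) (htf.mem_toFinset.2 hy)).trans (le_max_right e1 _))
    (hev y (htK hy))
  have h3 := cone_smul _ (sub_nonneg.2 hxy) (TM_one (g := g) (k := k) (max e1 (htf.toFinset.sup ev)))
  convert Submodule.add_mem _ (Submodule.add_mem _ h1 h2) h3 using 1
  rw [T.map_sub, hTv]
  module
end
end
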